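/- arXiv:2003.11270 — 3 statements merged into one kernel-verified Lean document; each statement's English description precedes it below -/
import Mathlib

section
/- Let k ≥ 2 and let E₁, …, E_{3k-2} be non-empty edge subsets of a graph such that ν(E_i ∪ E_j) ≥ k for every i ≠ j. Then E = ⋃ E_i contains a rainbow matching of size k, i.e., a matching e₁, …, e_k with e_t ∈ E_{i_t} for distinct indices i₁, …, i_k. -/
attribute [local instance] Classical.propDecidable

/-- A matching: a finite set of non-loop edges that are pairwise vertex-disjoint. -/
def IsMatching {V : Type} (M : Finset (Sym2 V)) : Prop :=
  (∀ e ∈ M, ¬ e.IsDiag) ∧ ∀ e ∈ M, ∀ f ∈ M, e ≠ f → ∀ v, v ∈ e → v ∉ f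

/-- The matching number of a finite edge set: the maximum size of a matching contained in it. -/
noncomputable def nu {V : Type} (E : Finset (Sym2 V)) : ℕ :=
  (E.powerset.filter fun M => IsMatching M).sup Finset.card

/-!
Let `m` be the largest size of a rainbow matching and follow rainbow edge sets `H` with `ν(H) = m`,
measured by `|H|` plus the number of essential vertices, those covered by every maximum matching.
By Gallai–Edmonds theory, adding any number of edges each of which alone changes neither `ν(H)` nor
the essential vertices does not change `ν(H)`. If two indices are unused by `H`, their union has
larger matching number, so one of its edges, added to `H`, lowers the number of essential vertices.
Starting from a matching, of potential `3m`, and repeating this, all essential vertices disappear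
while at most `3m` edges are used.

There are `3m + 1` sets, so no rainbow `H` with `ν(H) = m` can have potential below `3m`. An odd
cycle of length at least five, alternating in maximum matchings, would give such an `H`; this forces
closing edges into triangles, and then every edge of a set unused by an `H` without essential
vertices lies in `H` already. Recolouring such an edge frees its old index, so the set of that index
lies in `H` as well, and the union of the two sets has matching number at most `m`, a contradiction.
-/

section Verts

variable {V : Type*} {E H : Finset (Sym2 V)} {v x y : V}

/-- The vertices covered by a set of edges. -/
noncomputable def verts (E : Finset (Sym2 V)) : Finset V := E.biUnion Sym2.toFinset

theorem mem_verts : v ∈ verts E ↔ ∃ e ∈ E, v ∈ e := by simp [verts]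

theorem mem_verts_left (h : s(x, y) ∈ E) : x ∈ verts E := mem_verts.2 ⟨_, h, by simp⟩

theorem mem_verts_right (h : s(x, y) ∈ E) : y ∈ verts E := mem_verts.2 ⟨_, h, by simp⟩

theorem exists_mem_of_mem_verts (h : x ∈ verts E) : ∃ y, s(x, y) ∈ E := by
  obtain ⟨_, he, y, rfl⟩ := mem_verts.1 h
  exact ⟨y, he⟩

theorem verts_mono (h : E ⊆ H) : verts E ⊆ verts H :=
  Finset.biUnion_subset_biUnion_of_subset_left _ h

@[simp]
theorem verts_empty : verts (∅ : Finset (Sym2 V)) = ∅ := by simp [verts]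

@[simp]
theorem verts_insert : verts (insert s(x, y) E) = insert x (insert y (verts E)) := by
  ext v
  simp [mem_verts, or_assoc]

@[simp]
theorem verts_singleton : verts {s(x, y)} = {x, y} := by
  rw [← insert_empty_eq, verts_insert, verts_empty, insert_empty_eq]

@[simp]
theorem verts_union : verts (E ∪ H) = verts E ∪ verts H := Finset.union_biUnion

theorem card_insert_of_notMem_verts (hx : x ∉ verts E) :
    (insert s(x, y) E).card = E.card + 1 :=
  Finset.card_insert_of_notMem fun h => hx (mem_verts_left h)

end Verts

section Matching

variable {V : Type} {M N S R : Finset (Sym2 V)} {a v x y z : V}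

theorem isMatching_empty : IsMatching (∅ : Finset (Sym2 V)) := by simp [IsMatching]

namespace IsMatching

theorem mono (hN : IsMatching N) (h : M ⊆ N) : IsMatching M :=
  ⟨fun e he => hN.1 e (h he), fun e he f hf => hN.2 e (h he) f (h hf)⟩

theorem ne (hM : IsMatching M) (h : s(x, y) ∈ M) : x ≠ y := by simpa using hM.1 _ h

theorem eq_of_mem_of_mem (hM : IsMatching M) {e f : Sym2 V} (he : e ∈ M) (hf : f ∈ M)
    (hve : v ∈ e) (hvf : v ∈ f) : e = f := by
  by_contra hef
  exact hM.2 e he f hf hef v hve hvf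

theorem mate_unique (hM : IsMatching M) (hy : s(x, y) ∈ M) (hz : s(x, z) ∈ M) : y = z :=
  Sym2.congr_right.1 (hM.eq_of_mem_of_mem hy hz (Sym2.mem_mk_left x y) (Sym2.mem_mk_left x z))

protected theorem union (hM : IsMatching M) (hN : IsMatching N)
    (hd : Disjoint (verts M) (verts N)) : IsMatching (M ∪ N) := by
  have hcross : ∀ e ∈ M, ∀ f ∈ N, ∀ v ∈ e, v ∉ f := fun e he f hf v hve hvf =>
    Finset.disjoint_left.1 hd (mem_verts.2 ⟨e, he, hve⟩) (mem_verts.2 ⟨f, hf, hvf⟩)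
  refine ⟨fun e he => (Finset.mem_union.1 he).elim (hM.1 e) (hN.1 e), fun e he f hf hef v hve => ?_⟩
  rcases Finset.mem_union.1 he with he | he <;> rcases Finset.mem_union.1 hf with hf | hf
  · exact hM.2 e he f hf hef v hve
  · exact hcross e he f hf v hve
  · exact fun hvf => hcross f hf e he v hvf hve
  · exact hN.2 e he f hf hef v hve

protected theorem insert (hM : IsMatching M) (hxy : x ≠ y) (hx : x ∉ verts M)
    (hy : y ∉ verts M) : IsMatching (insert s(x, y) M) := by
  have hedge : IsMatching {s(x, y)} := by simp [IsMatching, hxy]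
  refine Finset.insert_eq s(x, y) M ▸ hedge.union hM ?_
  simp [hx, hy]

theorem verts_sdiff (hM : IsMatching M) (hS : S ⊆ M) : verts (M \ S) = verts M \ verts S := by
  ext v
  simp only [Finset.mem_sdiff, mem_verts]
  constructor
  · rintro ⟨e, ⟨he, heS⟩, hve⟩
    refine ⟨⟨e, he, hve⟩, fun ⟨f, hf, hvf⟩ => heS ?_⟩
    rwa [hM.eq_of_mem_of_mem he (hS hf) hve hvf]
  · rintro ⟨⟨e, he, hve⟩, hv⟩
    exact ⟨e, ⟨he, fun heS => hv ⟨e, heS, hve⟩⟩, hve⟩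

theorem verts_erase (hM : IsMatching M) (h : s(x, y) ∈ M) :
    verts (M.erase s(x, y)) = verts M \ {x, y} := by
  rw [Finset.erase_eq, hM.verts_sdiff (Finset.singleton_subset_iff.2 h),
    verts_singleton]

theorem card_verts (hM : IsMatching M) : (verts M).card = 2 * M.card := by
  have hdisj : (M : Set (Sym2 V)).PairwiseDisjoint Sym2.toFinset := fun e he f hf hef =>
    Finset.disjoint_left.2 fun v hve hvf =>
      hM.2 e he f hf hef v (Sym2.mem_toFinset.1 hve) (Sym2.mem_toFinset.1 hvf)
  rw [verts, Finset.card_biUnion hdisj,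
    Finset.sum_const_nat fun e he => Sym2.card_toFinset_of_not_isDiag e (hM.1 e he), mul_comm]

theorem verts_sdiff_union (hM : IsMatching M) (hS : S ⊆ M) :
    verts (M \ S ∪ R) = verts M \ verts S ∪ verts R := by
  rw [verts_union, hM.verts_sdiff hS]

theorem sdiff_union (hM : IsMatching M) (hS : S ⊆ M) (hR : IsMatching R)
    (hd : Disjoint (verts M \ verts S) (verts R)) : IsMatching (M \ S ∪ R) :=
  (hM.mono Finset.sdiff_subset).union hR (hM.verts_sdiff hS ▸ hd)

theorem exists_of_verts_eq_erase (hM : IsMatching M) (hS : S ⊆ M) (hR : IsMatching R)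
    (ha : a ∉ verts M) (hy : y ∈ insert a (verts S))
    (hRv : verts R = (insert a (verts S)).erase y) :
    ∃ M' ⊆ M ∪ R, IsMatching M' ∧ M'.card = M.card ∧
      verts M' = (insert a (verts M)).erase y := by
  have hSM := verts_mono hS
  have hM' : IsMatching (M \ S ∪ R) := hM.sdiff_union hS hR (by
    rw [Finset.disjoint_left]
    grind)
  have hv : verts (M \ S ∪ R) = (insert a (verts M)).erase y := by
    rw [hM.verts_sdiff_union hS, hRv]
    grind
  refine ⟨_, Finset.union_subset_union_left Finset.sdiff_subset, hM', ?_, hv⟩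
  have hcard := congrArg Finset.card hv
  rw [Finset.card_erase_of_mem (by grind), Finset.card_insert_of_notMem ha, hM.card_verts,
    hM'.card_verts] at hcard
  lia

theorem exists_related_notMem_verts (hM : IsMatching M) (hN : IsMatching N) (r : Setoid V)
    (hr : ∀ x y, s(x, y) ∈ M ∪ N → r x y) (hlt : M.card < N.card) :
    ∃ x y, x ≠ y ∧ x ∉ verts M ∧ y ∉ verts M ∧ r x y := by
  let classOf : Sym2 V → Quotient r := fun e => ⟦e.out.1⟧
  have hclass : ∀ e ∈ M ∪ N, ∀ v ∈ e, classOf e = ⟦v⟧ := by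
    rintro e he v ⟨w, rfl⟩
    have hout := Sym2.out_fst_mem s(v, w)
    rcases Sym2.mem_iff.1 hout with h | h
    · exact congrArg _ h
    · exact (congrArg _ h).trans (Quotient.sound (r.symm (hr v w he)))
  obtain ⟨q, -, hq⟩ : ∃ q ∈ (M ∪ N).image classOf,
      (M.filter (classOf · = q)).card < (N.filter (classOf · = q)).card := by
    apply Finset.exists_lt_of_sum_lt
    rwa [← Finset.card_eq_sum_card_fiberwise, ← Finset.card_eq_sum_card_fiberwise] <;>
      exact fun e he => Finset.mem_image_of_mem _ (by grind)
  -- Covered sets have even size, so inside the class `q` the deficit is at least two.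
  have htwo : 1 < (verts (N.filter (classOf · = q)) \ verts (M.filter (classOf · = q))).card := by
    have hle := Finset.le_card_sdiff (verts (M.filter (classOf · = q)))
      (verts (N.filter (classOf · = q)))
    rw [(hM.mono (Finset.filter_subset _ _)).card_verts,
      (hN.mono (Finset.filter_subset _ _)).card_verts] at hle
    lia
  have hmem : ∀ v ∈ verts (N.filter (classOf · = q)) \ verts (M.filter (classOf · = q)),
      v ∉ verts M ∧ ⟦v⟧ = q := by
    intro v hv
    simp only [Finset.mem_sdiff, mem_verts, Finset.mem_filter] at hv ⊢
    grind
  obtain ⟨x, hx, y, hy, hxy⟩ := Finset.one_lt_card.1 htwo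
  exact ⟨x, y, hxy, (hmem x hx).1, (hmem y hy).1,
    Quotient.exact ((hmem x hx).2.trans (hmem y hy).2.symm)⟩

end IsMatching

end Matching

section AltPath

variable {V : Type} {M N S F : Finset (Sym2 V)} {a b y z : V}

/-- `AltPath b a S F`: there is a path of even length from `b` to `a` whose edges lie alternately
in `S` and `F`, starting with an edge of `S`. Its vertex set is `insert b (verts F)`. -/
inductive AltPath : V → V → Finset (Sym2 V) → Finset (Sym2 V) → Prop
  | nil (a : V) : AltPath a a ∅ ∅
  | cons {b c x a : V} {S F : Finset (Sym2 V)} (h : AltPath x a S F)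
      (hb : b ∉ insert x (verts F)) (hc : c ∉ insert x (verts F)) (hbc : b ≠ c) :
      AltPath b a (insert s(b, c) S) (insert s(c, x) F)

namespace AltPath

theorem notMem_verts_right (h : AltPath b a S F) : b ∉ verts F := by
  induction h with grind [verts_empty, verts_insert]

theorem insert_verts (h : AltPath b a S F) : insert a (verts S) = insert b (verts F) := by
  induction h with grind [verts_empty, verts_insert]

theorem notMem_verts_left (h : AltPath b a S F) : a ∉ verts S := by
  induction h with
  | nil => simp
  | cons h => grind [h.insert_verts, verts_insert]

theorem isMatching_left (h : AltPath b a S F) : IsMatching S := by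
  induction h with
  | nil => exact isMatching_empty
  | cons h hb hc hbc ih =>
    rw [← h.insert_verts] at hb hc
    exact ih.insert hbc (by grind) (by grind)

theorem isMatching_right (h : AltPath b a S F) : IsMatching F := by
  induction h with
  | nil => exact isMatching_empty
  | cons h _ hc _ ih => exact ih.insert (by grind) (by grind) h.notMem_verts_right

theorem card_eq (h : AltPath b a S F) : S.card = F.card := by
  have hcard := congrArg Finset.card h.insert_verts
  rw [Finset.card_insert_of_notMem h.notMem_verts_left,
    Finset.card_insert_of_notMem h.notMem_verts_right, h.isMatching_left.card_verts,
    h.isMatching_right.card_verts] at hcard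
  lia

theorem verts_right (h : AltPath b a S F) : verts F = (insert a (verts S)).erase b := by
  rw [h.insert_verts, Finset.erase_insert h.notMem_verts_right]

theorem right_eq_singleton (h : AltPath b a S F) (hF : F.card = 1) :
    ∃ c, S = {s(b, c)} ∧ F = {s(c, a)} := by
  cases h with
  | nil => simp at hF
  | @cons _ c x _ S F h hb hc hbc =>
    rw [card_insert_of_notMem_verts (by grind)] at hF
    cases h with
    | nil => exact ⟨c, rfl, rfl⟩
    | cons h hb hc => grind [card_insert_of_notMem_verts]

/-- Deleting `y` splits the path in two. The halves are perfectly matched if `y` is at even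
distance from the ends; otherwise each half has its end left over. -/
theorem exists_verts_eq_erase_or (h : AltPath b a S F) (hy : y ∈ insert b (verts F)) :
    (∃ R ⊆ S ∪ F, IsMatching R ∧ verts R = (insert b (verts F)).erase y) ∨
      y ≠ a ∧ y ≠ b ∧ a ≠ b ∧
        ∃ R ⊆ S ∪ F, IsMatching R ∧ verts R = insert b (verts F) \ {y, a, b} := by
  induction h with
  | nil a => exact .inl ⟨∅, by simp, isMatching_empty, by grind [verts_empty]⟩
  | @cons b c x a S F h hb hc hbc ih =>
    have haS := h.insert_verts
    by_cases hyb : y = b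
    · exact .inl ⟨_, Finset.subset_union_right, (h.cons hb hc hbc).isMatching_right,
        by grind [verts_insert]⟩
    by_cases hyc : y = c
    · exact .inr ⟨by grind, hyb, by grind, S, by grind, h.isMatching_left,
        by grind [verts_insert, h.notMem_verts_left]⟩
    rcases ih (by grind [verts_insert]) with
      ⟨R, hR, hRm, hRv⟩ | ⟨hya, hyx, hax, R, hR, hRm, hRv⟩
    · exact .inl ⟨insert s(b, c) R, by grind, hRm.insert hbc (by grind) (by grind),
        by grind [verts_insert]⟩
    · exact .inr ⟨hya, hyb, by grind, insert s(c, x) R, by grind,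
        hRm.insert (by grind) (by grind) (by grind), by grind [verts_insert]⟩

theorem exists_verts_eq_erase (h : AltPath b a S F)
    (hy : y ∈ insert a (verts S)) :
    ∃ R ⊆ insert s(a, b) (S ∪ F), IsMatching R ∧ verts R = (insert a (verts S)).erase y := by
  rw [h.insert_verts] at hy ⊢
  have ha : a ∈ insert b (verts F) := h.insert_verts ▸ Finset.mem_insert_self a _
  rcases h.exists_verts_eq_erase_or hy with ⟨R, hR, hRm, hRv⟩ | ⟨hya, hyb, hab, R, hR, hRm, hRv⟩
  · exact ⟨R, hR.trans (Finset.subset_insert _ _), hRm, hRv⟩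
  · exact ⟨insert s(a, b) R, Finset.insert_subset_insert _ hR,
      hRm.insert hab (by grind) (by grind), by grind [verts_insert]⟩

theorem exists_shift_left (h : AltPath b a S F) (hM : IsMatching M) (hS : S ⊆ M)
    (ha : a ∉ verts M) :
    ∃ M' ⊆ M ∪ F, IsMatching M' ∧ M'.card = M.card ∧ verts M' = (insert a (verts M)).erase b :=
  hM.exists_of_verts_eq_erase hS h.isMatching_right ha
    (h.insert_verts ▸ Finset.mem_insert_self b _) h.verts_right

theorem exists_shift_right (h : AltPath b a S F) (hN : IsMatching N) (hF : F ⊆ N)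
    (hb : b ∉ verts N) :
    ∃ N' ⊆ N ∪ S, IsMatching N' ∧ N'.card = N.card ∧ verts N' = (insert b (verts N)).erase a :=
  hN.exists_of_verts_eq_erase hF h.isMatching_left hb
    (h.insert_verts ▸ Finset.mem_insert_self a _)
    (by rw [← h.insert_verts, Finset.erase_insert h.notMem_verts_left])

theorem exists_augment (h : AltPath b z S F) (hN : IsMatching N) (hF : F ⊆ N)
    (hb : b ∉ verts N) (hza : z ≠ a) (hab : a ≠ b) (ha : a ∉ verts N) :
    ∃ N' ⊆ insert s(z, a) (S ∪ N), IsMatching N' ∧ N'.card = N.card + 1 ∧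
      verts N' = insert a (insert b (verts N)) := by
  have hz : z ∈ insert b (verts N) :=
    Finset.insert_subset_insert b (verts_mono hF) (h.insert_verts ▸ Finset.mem_insert_self z _)
  obtain ⟨N', hN', hN'm, hN'c, hN'v⟩ := h.exists_shift_right hN hF hb
  refine ⟨insert s(z, a) N', by grind, hN'm.insert hza (by grind) (by grind), ?_, ?_⟩
  · rw [card_insert_of_notMem_verts (by grind), hN'c]
  · rw [verts_insert, hN'v]
    grind

theorem exists_diminish (h : AltPath b z S F) (hM : IsMatching M) (hS : S ⊆ M)
    (hza : s(z, a) ∈ M) :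
    ∃ M' ⊆ M ∪ F, IsMatching M' ∧ M'.card + 1 = M.card ∧ verts M' = verts M \ {a, b} := by
  have hv := hM.verts_erase hza
  have hne := hM.ne hza
  have hzaS : s(z, a) ∉ S := fun hS' => h.notMem_verts_left (mem_verts_left hS')
  obtain ⟨M', hM', hM'm, hM'c, hM'v⟩ := h.exists_shift_left
    (hM.mono (Finset.erase_subset s(z, a) M)) (Finset.subset_erase.2 ⟨hS, hzaS⟩) (by grind)
  refine ⟨M', by grind, hM'm, hM'c ▸ Finset.card_erase_add_one hza, ?_⟩
  grind [mem_verts_left hza]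

end AltPath

theorem exists_altPath (hM : IsMatching M) (hN : IsMatching N) (hb : b ∉ verts N) :
    ∃ z S F, S ⊆ M ∧ F ⊆ N ∧ AltPath b z S F ∧
      (z ∉ verts M ∨ ∃ a, s(z, a) ∈ M ∧ a ≠ b ∧ a ∉ verts N) := by
  induction hn : M.card using Nat.strong_induction_on generalizing M N b with
  | _ n ih =>
  by_cases hbM : b ∉ verts M
  · exact ⟨b, ∅, ∅, by simp, by simp, .nil b, .inl hbM⟩
  obtain ⟨c, hbc⟩ := exists_mem_of_mem_verts (not_not.1 hbM)
  have hne := hM.ne hbc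
  by_cases hcN : c ∉ verts N
  · exact ⟨b, ∅, ∅, by simp, by simp, .nil b, .inr ⟨c, hbc, hne.symm, hcN⟩⟩
  obtain ⟨x, hcx⟩ := exists_mem_of_mem_verts (not_not.1 hcN)
  have hcx' := hN.ne hcx
  have hxN := mem_verts_right hcx
  have hMv := hM.verts_erase hbc
  have hNv := hN.verts_erase hcx
  have hx : x ∉ verts (N.erase s(c, x)) := by simp [hNv]
  obtain ⟨z, S, F, hS, hF, h, hend⟩ := ih (M.erase s(b, c)).card
    (hn ▸ Finset.card_erase_lt_of_mem hbc) (hM.mono (Finset.erase_subset _ _))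
    (hN.mono (Finset.erase_subset _ _)) hx rfl
  clear ih
  have hFv := verts_mono hF
  have hz : z ∈ insert x (verts F) := h.insert_verts ▸ Finset.mem_insert_self z _
  refine ⟨z, insert s(b, c) S, insert s(c, x) F, by grind, by grind,
    h.cons (by grind) (by grind) hne, hend.imp (by grind) ?_⟩
  rintro ⟨a, hza, hax, haN⟩
  have haM := mem_verts_right hza
  exact ⟨a, Finset.mem_of_mem_erase hza, by grind, by grind⟩

end AltPath

section Exposable

variable {V : Type} {G H M N U : Finset (Sym2 V)} {a d u v w x y : V} {f : Sym2 V}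

/-- A matching contained in `H` and of maximum size among those. -/
structure IsMaxMatching (H M : Finset (Sym2 V)) : Prop where
  subset : M ⊆ H
  isMatching : IsMatching M
  card_eq : M.card = nu H

/-- Some maximum matching of `H` misses `v`; the Gallai–Edmonds set `D(H)` consists of these
vertices. -/
def Exposable (H : Finset (Sym2 V)) (v : V) : Prop := ∃ M, IsMaxMatching H M ∧ v ∉ verts M

/-- Some maximum matching of `H` misses both `u` and `v`. -/
def CoExposable (H : Finset (Sym2 V)) (u v : V) : Prop :=
  ∃ M, IsMaxMatching H M ∧ u ∉ verts M ∧ v ∉ verts M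

theorem IsMatching.card_le_nu (hM : IsMatching M) (hMH : M ⊆ H) : M.card ≤ nu H :=
  Finset.le_sup (f := Finset.card) (by simp [hM, hMH])

theorem exists_isMaxMatching (H : Finset (Sym2 V)) : ∃ M, IsMaxMatching H M := by
  have hne : (H.powerset.filter fun M => IsMatching M).Nonempty :=
    ⟨∅, by simp [isMatching_empty]⟩
  obtain ⟨M, hM, hcard⟩ := Finset.exists_mem_eq_sup _ hne Finset.card
  rw [Finset.mem_filter, Finset.mem_powerset] at hM
  exact ⟨M, hM.1, hM.2, hcard.symm⟩

theorem nu_mono (h : H ⊆ G) : nu H ≤ nu G := by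
  obtain ⟨M, hM⟩ := exists_isMaxMatching H
  exact hM.card_eq ▸ hM.isMatching.card_le_nu (hM.subset.trans h)

theorem IsMaxMatching.mono (hM : IsMaxMatching H M) (h : H ⊆ G) (hn : nu H = nu G) :
    IsMaxMatching G M :=
  ⟨hM.subset.trans h, hM.isMatching, hM.card_eq.trans hn⟩

theorem Exposable.mono (hv : Exposable H v) (h : H ⊆ G) (hn : nu H = nu G) : Exposable G v :=
  hv.imp fun _ hM => ⟨hM.1.mono h hn, hM.2⟩

theorem exposable_of_notMem_verts (hv : v ∉ verts H) : Exposable H v :=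
  (exists_isMaxMatching H).imp fun _ hM => ⟨hM, fun h => hv (verts_mono hM.subset h)⟩

theorem CoExposable.symm (h : CoExposable H u v) : CoExposable H v u :=
  h.imp fun _ hM => ⟨hM.1, hM.2.2, hM.2.1⟩

theorem CoExposable.left (h : CoExposable H u v) : Exposable H u :=
  h.imp fun _ hM => ⟨hM.1, hM.2.1⟩

theorem not_coExposable (hn : nu (insert s(x, y) H) = nu H) (hxy : x ≠ y) :
    ¬ CoExposable H x y := by
  rintro ⟨M, hM, hx, hy⟩
  have hle := (hM.isMatching.insert hxy hx hy).card_le_nu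
    (Finset.insert_subset_insert _ hM.subset)
  rw [card_insert_of_notMem_verts hx, hM.card_eq, hn] at hle
  lia

theorem exists_altPath_of_isMaxMatching (hM : IsMaxMatching H M) (hN : IsMaxMatching H N)
    (hb : b ∉ verts N) :
    ∃ z S F, S ⊆ M ∧ F ⊆ N ∧ AltPath b z S F ∧ z ∉ verts M := by
  obtain ⟨z, S, F, hS, hF, h, hz | ⟨a, hza, hab, ha⟩⟩ :=
    exists_altPath hM.isMatching hN.isMatching hb
  · exact ⟨z, S, F, hS, hF, h, hz⟩
  obtain ⟨N', hN', hN'm, hN'c, -⟩ :=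
    h.exists_augment hN.isMatching hF hb (hM.isMatching.ne hza) hab ha
  have hle := hN'm.card_le_nu (hN'.trans (Finset.insert_subset (hM.subset hza)
    (Finset.union_subset (hS.trans hM.subset) hN.subset)))
  rw [hN'c, hN.card_eq] at hle
  lia

/-- Gallai's lemma. -/
theorem CoExposable.or_of_exposable (huw : CoExposable H u w) (hne : u ≠ w)
    (hv : Exposable H v) : CoExposable H u v ∨ CoExposable H v w := by
  obtain ⟨N, hN, hu, hw⟩ := huw
  obtain ⟨M, hM, hv⟩ := hv
  obtain ⟨z, S, F, hS, hF, h, hz⟩ := exists_altPath_of_isMaxMatching hM hN hu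
  by_cases hzv : z = v
  · obtain ⟨N', hN', hN'm, hN'c, hN'v⟩ := h.exists_shift_right hN.isMatching hF hu
    exact .inr ⟨N', ⟨hN'.trans (Finset.union_subset hN.subset (hS.trans hM.subset)), hN'm,
      hN'c.trans hN.card_eq⟩, by grind, by grind⟩
  · obtain ⟨M', hM', hM'm, hM'c, hM'v⟩ := h.exists_shift_left hM.isMatching hS hz
    exact .inl ⟨M', ⟨hM'.trans (Finset.union_subset hM.subset (hF.trans hN.subset)), hM'm,
      hM'c.trans hM.card_eq⟩, by grind, by grind⟩

/-- The edges of `H` that avoid `a`. -/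
noncomputable def deleteVertex (H : Finset (Sym2 V)) (a : V) : Finset (Sym2 V) :=
  H.filter (a ∉ ·)

theorem deleteVertex_subset : deleteVertex H a ⊆ H := Finset.filter_subset _ _

theorem notMem_verts_deleteVertex : a ∉ verts (deleteVertex H a) := by
  simp [deleteVertex, mem_verts]

theorem IsMatching.card_le_card_deleteVertex (hM : IsMatching M) :
    M.card ≤ (deleteVertex M a).card + 1 := by
  have hle : (M.filter (a ∈ ·)).card ≤ 1 := Finset.card_le_one.2 fun e he f hf =>
    hM.eq_of_mem_of_mem (Finset.mem_filter.1 he).1 (Finset.mem_filter.1 hf).1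
      (Finset.mem_filter.1 he).2 (Finset.mem_filter.1 hf).2
  have hsplit := Finset.card_filter_add_card_filter_not (s := M) (a ∈ ·)
  rw [deleteVertex]
  lia

theorem nu_le_nu_deleteVertex : nu H ≤ nu (deleteVertex H a) + 1 := by
  obtain ⟨M, hM⟩ := exists_isMaxMatching H
  have hle := (hM.isMatching.mono deleteVertex_subset).card_le_nu
    (Finset.filter_subset_filter (a ∉ ·) hM.subset)
  exact hM.card_eq ▸ hM.isMatching.card_le_card_deleteVertex.trans (Nat.succ_le_succ hle)

theorem nu_deleteVertex (ha : ¬ Exposable H a) : nu (deleteVertex H a) + 1 = nu H := by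
  refine le_antisymm ?_ nu_le_nu_deleteVertex
  refine (nu_mono deleteVertex_subset).lt_of_ne fun hn => ha ?_
  exact (exposable_of_notMem_verts notMem_verts_deleteVertex).mono deleteVertex_subset hn

theorem exposable_deleteVertex (hv : Exposable H v) (ha : ¬ Exposable H a) :
    Exposable (deleteVertex H a) v := by
  obtain ⟨M, hM, hvM⟩ := hv
  have hsub : deleteVertex M a ⊆ deleteVertex H a :=
    Finset.filter_subset_filter _ hM.subset
  have hm := hM.isMatching.mono (deleteVertex_subset (a := a))
  refine ⟨_, ⟨hsub, hm, (hm.card_le_nu hsub).antisymm ?_⟩,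
    fun h => hvM (verts_mono deleteVertex_subset h)⟩
  have hcard := hM.isMatching.card_le_card_deleteVertex (a := a)
  have hn := nu_deleteVertex ha
  rw [hM.card_eq] at hcard
  lia

/-- The stability lemma of Gallai–Edmonds theory. -/
theorem exposable_of_exposable_deleteVertex (hx : Exposable (deleteVertex H a) x)
    (ha : ¬ Exposable H a) (hd : Exposable H d) (had : s(a, d) ∈ H) (hxa : x ≠ a) :
    Exposable H x := by
  have hn := nu_deleteVertex ha
  obtain ⟨M, hM, hdM⟩ := id hd
  obtain ⟨N, hN, hxN⟩ := hx
  have hNH := hN.subset.trans deleteVertex_subset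
  have haN : a ∉ verts N := fun h => notMem_verts_deleteVertex (verts_mono hN.subset h)
  obtain ⟨z, S, F, hS, hF, h, hz | ⟨b, hzb, hbx, hb⟩⟩ :=
    exists_altPath hM.isMatching hN.isMatching hxN
  · obtain ⟨M', hM', hM'm, hM'c, hM'v⟩ := h.exists_shift_left hM.isMatching hS hz
    exact ⟨M', ⟨hM'.trans (Finset.union_subset hM.subset (hF.trans hNH)), hM'm,
      hM'c.trans hM.card_eq⟩, by grind⟩
  by_cases hba : b = a
  · obtain ⟨M', hM', hM'm, hM'c, hM'v⟩ := h.exists_diminish hM.isMatching hS hzb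
    by_cases hxd : x = d
    · exact hxd ▸ hd
    have haM' : a ∉ verts M' := by grind
    refine ⟨insert s(a, d) M', ⟨?_, ?_, ?_⟩, ?_⟩
    · exact Finset.insert_subset had (hM'.trans (Finset.union_subset hM.subset (hF.trans hNH)))
    · exact hM'm.insert (fun had => ha (had ▸ hd)) haM' (by grind)
    · rw [card_insert_of_notMem_verts haM', hM'c, hM.card_eq]
    · grind [verts_insert]
  · obtain ⟨N', hN', hN'm, hN'c, hN'v⟩ :=
      h.exists_augment hN.isMatching hF hxN (hM.isMatching.ne hzb) hbx hb
    refine absurd ⟨N', ⟨hN'.trans ?_, hN'm, ?_⟩, ?_⟩ ha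
    · exact Finset.insert_subset (hM.subset hzb)
        (Finset.union_subset (hS.trans hM.subset) hNH)
    · rw [hN'c, hN.card_eq, hn]
    · grind

theorem exposable_deleteVertex_iff (ha : ¬ Exposable H a) (hd : Exposable H d)
    (had : s(a, d) ∈ H) : Exposable (deleteVertex H a) x ↔ x = a ∨ Exposable H x := by
  refine ⟨fun hx => or_iff_not_imp_left.2 fun hxa =>
    exposable_of_exposable_deleteVertex hx ha hd had hxa, ?_⟩
  rintro (rfl | hx)
  · exact exposable_of_notMem_verts notMem_verts_deleteVertex
  · exact exposable_deleteVertex hx ha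

/-- Adding the edge `f` to `H` changes neither the matching number nor the exposable vertices. -/
def Inert (H : Finset (Sym2 V)) (f : Sym2 V) : Prop :=
  nu (insert f H) = nu H ∧ ∀ v, Exposable (insert f H) v → Exposable H v

theorem inert_deleteVertex (hf : Inert H f) (haf : a ∉ f) (ha : ¬ Exposable H a)
    (hd : Exposable H d) (had : s(a, d) ∈ H) : Inert (deleteVertex H a) f := by
  have ha' : ¬ Exposable (insert f H) a := fun h => ha (hf.2 a h)
  have hd' := hd.mono (Finset.subset_insert f H) hf.1.symm
  have hdel : insert f (deleteVertex H a) = deleteVertex (insert f H) a := by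
    rw [deleteVertex, deleteVertex, Finset.filter_insert, if_pos haf]
  unfold Inert
  rw [hdel]
  refine ⟨?_, fun v hv => ?_⟩
  · have hn := nu_deleteVertex ha
    have hn' := nu_deleteVertex ha'
    rw [hf.1] at hn'
    lia
  · rw [exposable_deleteVertex_iff ha' hd' (Finset.mem_insert_of_mem had)] at hv
    exact (exposable_deleteVertex_iff ha hd had).2 (hv.imp_right (hf.2 v))

theorem Inert.exposable_right (hf : Inert H s(x, y)) (hx : Exposable H x)
    (hH : ∀ a d, s(a, d) ∈ H → Exposable H d → Exposable H a) : Exposable H y := by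
  by_contra hy
  obtain ⟨M, hM, hxM⟩ := id hx
  obtain ⟨w, hyw⟩ := exists_mem_of_mem_verts (not_not.1 fun hyM => hy ⟨M, hM, hyM⟩)
  have hv := hM.isMatching.verts_erase hyw
  have hxy : x ≠ y := fun hxy => hy (hxy ▸ hx)
  have hyw' := hM.isMatching.ne hyw
  have hwM := mem_verts_right hyw
  have hxM' : x ∉ verts (M.erase s(y, w)) := by grind
  refine hy (hH y w (hM.subset hyw) (hf.2 w ⟨insert s(x, y) (M.erase s(y, w)), ⟨?_, ?_, ?_⟩, ?_⟩))
  · exact Finset.insert_subset_insert _ ((Finset.erase_subset _ _).trans hM.subset)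
  · exact (hM.isMatching.mono (Finset.erase_subset _ _)).insert hxy hxM' (by grind)
  · rw [card_insert_of_notMem_verts hxM', Finset.card_erase_add_one hyw, hM.card_eq, hf.1]
  · grind [verts_insert]

/-- Vertices are related if they are both exposable or both not, and no maximum matching misses both
unless they coincide; transitivity is Gallai's lemma. -/
def exposableSetoid (H : Finset (Sym2 V)) : Setoid V where
  r x y := (Exposable H x ↔ Exposable H y) ∧ (x = y ∨ ¬ CoExposable H x y)
  iseqv :=
    { refl := fun _ => ⟨Iff.rfl, .inl rfl⟩
      symm := fun h => ⟨h.1.symm, h.2.imp Eq.symm fun hn hc => hn hc.symm⟩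
      trans := by
        rintro x y z ⟨hxy, hxy'⟩ ⟨hyz, hyz'⟩
        refine ⟨hxy.trans hyz, or_iff_not_imp_left.2 fun hne hxz => ?_⟩
        have := hxz.or_of_exposable hne (hxy.1 hxz.left)
        grind }

theorem inert_of_mem (hf : f ∈ H) : Inert H f := by
  rw [Inert, Finset.insert_eq_of_mem hf]
  exact ⟨rfl, fun _ => id⟩

theorem Inert.exposableSetoid_rel (hf : Inert H s(x, y))
    (hH : ∀ a d, s(a, d) ∈ H → Exposable H d → Exposable H a) : exposableSetoid H x y := by
  refine ⟨⟨fun hx => hf.exposable_right hx hH, fun hy => ?_⟩,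
    or_iff_not_imp_left.2 (not_coExposable hf.1)⟩
  rw [Sym2.eq_swap] at hf
  exact hf.exposable_right hy hH

theorem nu_union_of_forall_inert (hU : ∀ f ∈ U, Inert H f) : nu (H ∪ U) = nu H := by
  induction hn : nu H using Nat.strong_induction_on generalizing H U with
  | _ n ih =>
  subst hn
  refine le_antisymm ?_ (nu_mono Finset.subset_union_left)
  by_cases hbd : ∃ a d, s(a, d) ∈ H ∧ Exposable H d ∧ ¬ Exposable H a
  · obtain ⟨a, d, had, hd, ha⟩ := hbd
    have hn := nu_deleteVertex ha
    have hU' : ∀ f ∈ deleteVertex U a, Inert (deleteVertex H a) f := fun f hf =>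
      inert_deleteVertex (hU f (Finset.mem_filter.1 hf).1) (Finset.mem_filter.1 hf).2 ha hd had
    calc nu (H ∪ U) ≤ nu (deleteVertex (H ∪ U) a) + 1 := nu_le_nu_deleteVertex
      _ = nu (deleteVertex H a ∪ deleteVertex U a) + 1 := by
        rw [deleteVertex, Finset.filter_union]; rfl
      _ = nu (deleteVertex H a) + 1 := by rw [ih _ (by lia) hU' rfl]
      _ = nu H := hn
  · push Not at hbd
    by_contra! hlt
    obtain ⟨M, hM⟩ := exists_isMaxMatching H
    obtain ⟨N, hN⟩ := exists_isMaxMatching (H ∪ U)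
    have hrel : ∀ x y, s(x, y) ∈ M ∪ N → exposableSetoid H x y := fun x y hxy => by
      have hmem : s(x, y) ∈ H ∪ U := Finset.union_subset
        (hM.subset.trans Finset.subset_union_left) hN.subset hxy
      exact ((Finset.mem_union.1 hmem).elim inert_of_mem (hU _)).exposableSetoid_rel hbd
    obtain ⟨x, y, hne, hx, hy, hxy⟩ := hM.isMatching.exists_related_notMem_verts hN.isMatching
      (exposableSetoid H) hrel (by rwa [hM.card_eq, hN.card_eq])
    exact hxy.2.elim hne fun hc => hc ⟨M, hM, hx, hy⟩

theorem exists_not_inert_of_lt_nu (h : nu H < nu U) : ∃ f ∈ U, ¬ Inert H f := by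
  by_contra! hU
  exact h.not_ge (nu_union_of_forall_inert hU ▸ nu_mono Finset.subset_union_right)

end Exposable

section Tight

variable {V : Type} {G H M N S F : Finset (Sym2 V)} {a b c v : V} {f : Sym2 V}

/-- The vertices covered by every maximum matching of `H`. -/
noncomputable def essential (H : Finset (Sym2 V)) : Finset V :=
  (verts H).filter (¬ Exposable H ·)

/-- The potential of the argument: `exists_isRainbow_essential_eq_empty` trades essential vertices
for edges without increasing it. -/
noncomputable def cost (H : Finset (Sym2 V)) : ℕ := H.card + (essential H).card

/-- No subgraph of `G` with the same matching number is cheaper than a bare matching of that size,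
whose cost is `3 * nu G`. -/
def IsTight (G : Finset (Sym2 V)) : Prop := ∀ H ⊆ G, nu H = nu G → 3 * nu G ≤ cost H

theorem mem_essential : v ∈ essential H ↔ ¬ Exposable H v := by
  refine ⟨fun h => (Finset.mem_filter.1 h).2, fun h => Finset.mem_filter.2 ⟨?_, h⟩⟩
  exact not_not.1 fun hv => h (exposable_of_notMem_verts hv)

theorem exposable_of_essential_eq_empty (h : essential H = ∅) (v : V) : Exposable H v :=
  not_not.1 fun hv => Finset.notMem_empty v (h ▸ mem_essential.2 hv)

theorem essential_subset_verts (hM : IsMaxMatching H M) : essential H ⊆ verts M := fun _ hv =>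
  not_not.1 fun hvM => mem_essential.1 hv ⟨M, hM, hvM⟩

theorem essential_insert_ssubset (hn : nu (insert f H) = nu H) (hf : ¬ Inert H f) :
    essential (insert f H) ⊂ essential H := by
  obtain ⟨v, hv, hvH⟩ : ∃ v, Exposable (insert f H) v ∧ ¬ Exposable H v := by
    simpa [Inert, hn] using hf
  refine Finset.ssubset_iff_subset_ne.2 ⟨fun w hw => ?_, fun heq => ?_⟩
  · rw [mem_essential] at hw ⊢
    exact fun hwH => hw (hwH.mono (Finset.subset_insert f H) hn.symm)
  · exact mem_essential.1 (heq ▸ mem_essential.2 hvH) hv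

theorem IsMaxMatching.cost_le (hM : IsMaxMatching H M) : cost M ≤ 3 * nu H := by
  have hMM : IsMaxMatching M M := ⟨subset_rfl, hM.isMatching,
    (hM.isMatching.card_le_nu subset_rfl).antisymm (hM.card_eq ▸ nu_mono hM.subset)⟩
  have hle := Finset.card_le_card (essential_subset_verts hMM)
  rw [hM.isMatching.card_verts] at hle
  rw [cost, ← hM.card_eq]
  lia

/-- Rotating `M` around the odd cycle closed by `s(a, b)` exposes all its `2 * F.card + 1`
vertices. -/
theorem AltPath.exists_cost_add_card_le (h : AltPath b a S F) (hM : IsMaxMatching G M) (hS : S ⊆ M)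
    (hF : F ⊆ G) (ha : a ∉ verts M) (hab : s(a, b) ∈ G) :
    ∃ C ⊆ G, nu C = nu G ∧ cost C + F.card ≤ 3 * nu G + 1 := by
  set C := insert s(a, b) (M ∪ F)
  have hMC : M ⊆ C := by grind
  have hCG : C ⊆ G := Finset.insert_subset hab (Finset.union_subset hM.subset hF)
  have hn : M.card = nu C :=
    (hM.isMatching.card_le_nu hMC).antisymm (hM.card_eq ▸ nu_mono hCG)
  have hess : essential C ⊆ verts M \ verts S := by
    refine fun y hy => Finset.mem_sdiff.2
      ⟨essential_subset_verts ⟨hMC, hM.isMatching, hn⟩ hy, fun hyS => mem_essential.1 hy ?_⟩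
    obtain ⟨R, hR, hRm, hRv⟩ := h.exists_verts_eq_erase (Finset.mem_insert_of_mem hyS)
    obtain ⟨M', hM', hM'm, hM'c, hM'v⟩ :=
      hM.isMatching.exists_of_verts_eq_erase hS hRm ha (Finset.mem_insert_of_mem hyS) hRv
    exact ⟨M', ⟨by grind, hM'm, hM'c.trans hn⟩, by grind⟩
  have hcard := Finset.card_le_card hess
  rw [Finset.card_sdiff_of_subset (verts_mono hS), hM.isMatching.card_verts,
    h.isMatching_left.card_verts, h.card_eq, hM.card_eq] at hcard
  have hSM := Finset.card_le_card hS
  rw [h.card_eq, hM.card_eq] at hSM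
  have hCcard : C.card ≤ nu G + F.card + 1 := hM.card_eq ▸
    (Finset.card_insert_le _ _).trans (Nat.succ_le_succ (Finset.card_union_le M F))
  refine ⟨C, hCG, hn ▸ hM.card_eq, ?_⟩
  rw [cost]
  lia

theorem IsTight.mem_of_mem_of_mem (hG : IsTight G) (hM : IsMaxMatching G M)
    (hN : IsMaxMatching G N) (ha : a ∉ verts M) (hb : b ∉ verts N) (hab : s(a, b) ∈ G)
    (hne : a ≠ b) (hbc : s(b, c) ∈ M) : s(a, c) ∈ N := by
  obtain ⟨z, S, F, hS, hF, h, hz⟩ := exists_altPath_of_isMaxMatching hM hN hb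
  have hFG := hF.trans hN.subset
  obtain rfl : z = a := by
    by_contra hza
    obtain ⟨M', hM', hM'm, hM'c, hM'v⟩ := h.exists_shift_left hM.isMatching hS hz
    refine not_coExposable (by rw [Finset.insert_eq_of_mem hab]) hne ⟨M', ⟨?_, hM'm, ?_⟩, ?_⟩
    · exact hM'.trans (Finset.union_subset hM.subset hFG)
    · exact hM'c.trans hM.card_eq
    · grind
  have hcard : F.card ≤ 1 := by
    obtain ⟨C, hCG, hn, hle⟩ := h.exists_cost_add_card_le hM hS hFG ha hab
    have hge := hG C hCG hn
    lia
  have hpos : F.card ≠ 0 := fun h0 => by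
    have hz := h.insert_verts ▸ Finset.mem_insert_self z (verts S)
    rw [Finset.card_eq_zero.1 h0, verts_empty, insert_empty_eq, Finset.mem_singleton] at hz
    exact hne hz
  obtain ⟨c', rfl, rfl⟩ := h.right_eq_singleton (by lia)
  obtain rfl := hM.isMatching.mate_unique hbc (hS (Finset.mem_singleton_self _))
  exact Sym2.eq_swap ▸ hF (Finset.mem_singleton_self _)

theorem IsTight.mem_of_essential_eq_empty (hG : IsTight G) (hH : H ⊆ G) (hn : nu H = nu G)
    (hess : essential H = ∅) (hab : s(a, b) ∈ G) (hne : a ≠ b) : s(a, b) ∈ H := by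
  have hexp := exposable_of_essential_eq_empty hess
  obtain ⟨M, hM, ha⟩ := hexp a
  obtain ⟨N, hN, hb⟩ := hexp b
  have hMG := hM.mono hH hn
  obtain ⟨c, hbc⟩ : ∃ c, s(b, c) ∈ M := exists_mem_of_mem_verts <| not_not.1 fun hbM =>
    not_coExposable (by rw [Finset.insert_eq_of_mem hab]) hne ⟨M, hMG, ha, hbM⟩
  have hac := hN.subset (hG.mem_of_mem_of_mem hMG (hN.mono hH hn) ha hb hab hne hbc)
  obtain ⟨N', hN', hc⟩ := hexp c
  have hac' : a ≠ c := fun h => ha (h ▸ mem_verts_right hbc)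
  exact hN'.subset (hG.mem_of_mem_of_mem hMG (hN'.mono hH hn) ha hc (hH hac) hac'
    (Sym2.eq_swap ▸ hbc))

end Tight

section Rainbow

variable {α ι : Type*}

/-- `col` assigns distinct indices to the elements of `H`, each to a set of the family `E`
containing it. -/
def IsRainbow (E : ι → Finset α) (col : α → ι) (H : Finset α) : Prop :=
  Set.InjOn col H ∧ ∀ f ∈ H, f ∈ E (col f)

namespace IsRainbow

variable {E : ι → Finset α} {col : α → ι} {H H' : Finset α} {f : α} {A : ι}

theorem mono (hH : IsRainbow E col H) (h : H' ⊆ H) : IsRainbow E col H' :=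
  ⟨hH.1.mono (Finset.coe_subset.2 h), fun f hf => hH.2 f (h hf)⟩

/-- If `f` already belongs to `H`, this recolours it. -/
protected theorem insert [DecidableEq α] [DecidableEq ι] (hH : IsRainbow E col H)
    (hA : A ∉ H.image col) (hf : f ∈ E A) :
    IsRainbow E (Function.update col f A) (insert f H) := by
  have hcol : ∀ e ∈ H, col e ≠ A := fun e he h => hA (h ▸ Finset.mem_image_of_mem col he)
  refine ⟨fun e he e' he' hee' => ?_, fun e he => ?_⟩
  · have := @hH.1 e
    grind
  · have := hH.2 e
    grind

end IsRainbow

end Rainbow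

section RainbowMatching

variable {V : Type} {ι : Type*} {E : ι → Finset (Sym2 V)} {col : Sym2 V → ι}
  {H : Finset (Sym2 V)} {m k : ℕ} {A : ι}

theorem subset_of_notMem_image
    (hmax : ∀ col H, IsRainbow E col H → nu H ≤ m)
    (hcost : ∀ col H, IsRainbow E col H → nu H = m → 3 * m ≤ cost H)
    (hsimple : ∀ e ∈ E A, ¬ e.IsDiag)
    (hH : IsRainbow E col H) (hn : nu H = m) (hess : essential H = ∅) (hA : A ∉ H.image col) :
    E A ⊆ H := by
  rintro ⟨a, b⟩ hab
  have hrain := hH.insert hA hab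
  have hn' : nu (insert s(a, b) H) = m :=
    (hmax _ _ hrain).antisymm (hn ▸ nu_mono (Finset.subset_insert _ H))
  have htight : IsTight (insert s(a, b) H) := fun H' hH' hnH' =>
    hn' ▸ hcost _ H' (hrain.mono hH') (hnH'.trans hn')
  exact htight.mem_of_essential_eq_empty (Finset.subset_insert _ H) (hn.trans hn'.symm) hess
    (Finset.mem_insert_self _ H) (hsimple _ hab)

variable [Fintype ι]

theorem exists_isRainbow_insert_essential_ssubset
    (hmax : ∀ col H, IsRainbow E col H → nu H ≤ m)
    (hpair : ∀ i j, i ≠ j → m < nu (E i ∪ E j))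
    (hH : IsRainbow E col H) (hn : nu H = m) (hcard : H.card + 2 ≤ Fintype.card ι) :
    ∃ col' f, IsRainbow E col' (insert f H) ∧ essential (insert f H) ⊂ essential H := by
  have hunused : 1 < (H.image col)ᶜ.card := by
    have hle := Finset.card_image_le (s := H) (f := col)
    rw [Finset.card_compl]
    lia
  obtain ⟨i, hi, j, hj, hij⟩ := Finset.one_lt_card.1 hunused
  obtain ⟨f, hf, hfH⟩ := exists_not_inert_of_lt_nu (hn ▸ hpair i j hij)
  obtain ⟨A, hA, hfA⟩ : ∃ A, A ∉ H.image col ∧ f ∈ E A :=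
    (Finset.mem_union.1 hf).elim (⟨i, Finset.mem_compl.1 hi, ·⟩) (⟨j, Finset.mem_compl.1 hj, ·⟩)
  have hrain := hH.insert hA hfA
  refine ⟨_, f, hrain, essential_insert_ssubset ?_ hfH⟩
  exact (hn ▸ hmax _ _ hrain).antisymm (nu_mono (Finset.subset_insert f H))

theorem exists_isRainbow_essential_eq_empty
    (hmax : ∀ col H, IsRainbow E col H → nu H ≤ m)
    (hpair : ∀ i j, i ≠ j → m < nu (E i ∪ E j))
    (hH : IsRainbow E col H) (hn : nu H = m) (hcost : cost H < Fintype.card ι) :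
    ∃ col' H', IsRainbow E col' H' ∧ nu H' = m ∧ essential H' = ∅ ∧ H'.card ≤ cost H := by
  induction hs : (essential H).card using Nat.strong_induction_on generalizing col H with
  | _ s ih =>
  by_cases hess : essential H = ∅
  · exact ⟨col, H, hH, hn, hess, Nat.le_add_right _ _⟩
  have hpos := Finset.card_pos.2 (Finset.nonempty_iff_ne_empty.2 hess)
  have hcost_eq : cost H = H.card + (essential H).card := rfl
  obtain ⟨col', f, hrain, hlt⟩ :=
    exists_isRainbow_insert_essential_ssubset hmax hpair hH hn (by lia)
  have hlt := Finset.card_lt_card hlt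
  have hle : cost (insert f H) ≤ cost H := by
    have := Finset.card_insert_le f H
    rw [cost]
    lia
  have hn' : nu (insert f H) = m :=
    (hmax _ _ hrain).antisymm (hn ▸ nu_mono (Finset.subset_insert f H))
  obtain ⟨col'', H', hH', hnH', hess', hcard⟩ :=
    ih _ (hs ▸ hlt) hrain hn' (hle.trans_lt hcost) rfl
  exact ⟨col'', H', hH', hnH', hess', hcard.trans hle⟩

theorem card_le_cost_add_one
    (hmax : ∀ col H, IsRainbow E col H → nu H ≤ m)
    (hpair : ∀ i j, i ≠ j → m < nu (E i ∪ E j))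
    (hH : IsRainbow E col H) (hn : nu H = m) : Fintype.card ι ≤ cost H + 1 := by
  by_contra! hlt
  obtain ⟨col', H', hH', hn', hess, hcard⟩ :=
    exists_isRainbow_essential_eq_empty hmax hpair hH hn (by lia)
  obtain ⟨_, f, -, hss⟩ :=
    exists_isRainbow_insert_essential_ssubset hmax hpair hH' hn' (by lia)
  exact Finset.not_ssubset_empty _ (hess ▸ hss)

theorem exists_isRainbow_lt_nu (hm : 3 * m < Fintype.card ι) (hne : ∀ i, (E i).Nonempty)
    (hsimple : ∀ i, ∀ e ∈ E i, ¬ e.IsDiag) (hpair : ∀ i j, i ≠ j → m < nu (E i ∪ E j))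
    (hH : IsRainbow E col H) (hn : nu H = m) : ∃ col' H', IsRainbow E col' H' ∧ m < nu H' := by
  by_contra! hmax
  have hcost : ∀ col H, IsRainbow E col H → nu H = m → 3 * m ≤ cost H := fun col H hH hn =>
    Nat.le_of_lt_succ (hm.trans_le (card_le_cost_add_one hmax hpair hH hn))
  obtain ⟨M, hM⟩ := exists_isMaxMatching H
  have hMm : nu M = m := (hn ▸ nu_mono hM.subset).antisymm
    (hn ▸ hM.card_eq ▸ hM.isMatching.card_le_nu subset_rfl)
  have hMcost : cost M ≤ 3 * m := hn ▸ hM.cost_le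
  obtain ⟨c, G, hG, hnG, hess, hGcard⟩ := exists_isRainbow_essential_eq_empty hmax hpair
    (hH.mono hM.subset) hMm (hMcost.trans_lt hm)
  obtain ⟨A, hA⟩ : ∃ A, A ∉ G.image c := by
    by_contra! hall
    have hle := Finset.card_image_le (s := G) (f := c)
    rw [Finset.eq_univ_of_forall hall, Finset.card_univ] at hle
    lia
  have hAG := subset_of_notMem_image hmax hcost (hsimple A) hG hnG hess hA
  obtain ⟨f, hf⟩ := hne A
  have hfA : c f ≠ A := fun h => hA (h ▸ Finset.mem_image_of_mem c (hAG hf))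
  -- Recolouring `f` by `A` frees the index `c f`.
  have hrecol := hG.insert hA hf
  rw [Finset.insert_eq_of_mem (hAG hf)] at hrecol
  have hfree : c f ∉ G.image (Function.update c f A) := by
    have := hG.1
    grind [Set.InjOn]
  have hcG := subset_of_notMem_image hmax hcost (hsimple (c f)) hrecol hnG hess hfree
  exact (hpair (c f) A hfA).not_ge (hnG ▸ nu_mono (Finset.union_subset hcG hAG))

theorem exists_isRainbow_le_nu [Nonempty ι] (hk : 3 * k ≤ Fintype.card ι + 2)
    (hne : ∀ i, (E i).Nonempty) (hsimple : ∀ i, ∀ e ∈ E i, ¬ e.IsDiag)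
    (hpair : ∀ i j, i ≠ j → k ≤ nu (E i ∪ E j)) :
    ∃ col H, IsRainbow E col H ∧ k ≤ nu H := by
  induction k with
  | zero => exact ⟨fun _ => Classical.arbitrary ι, ∅, by simp [IsRainbow], Nat.zero_le _⟩
  | succ m ih =>
    obtain ⟨col, H, hH, hle⟩ := ih (by lia) fun i j hij => Nat.le_of_succ_le (hpair i j hij)
    rcases hle.eq_or_lt with hn | hlt
    · exact exists_isRainbow_lt_nu (by lia) hne hsimple hpair hH hn.symm
    · exact ⟨col, H, hH, hlt⟩

end RainbowMatching

/-- Let `k ≥ 2` and let `E₁, …, E_{3k-2}` be non-empty edge subsets of a graph such that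
`ν(E_i ∪ E_j) ≥ k` for every `i ≠ j`.  Then `⋃ E_i` contains a rainbow matching of size `k`:
a matching `e₁, …, e_k` with `e_t ∈ E_{i_t}` for pairwise distinct indices `i₁, …, i_k`. -/
theorem rainbow_matching_general {V : Type} [DecidableEq V] (k : ℕ) (hk : 2 ≤ k)
    (E : Fin (3 * k - 2) → Finset (Sym2 V))
    (hne : ∀ i, (E i).Nonempty)
    (hsimple : ∀ i, ∀ e ∈ E i, ¬ e.IsDiag)
    (hnu : ∀ i j, i ≠ j → k ≤ nu (E i ∪ E j)) :
    ∃ (f : Fin k → Sym2 V) (ι : Fin k → Fin (3 * k - 2)),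
      Function.Injective f ∧ Function.Injective ι ∧
      (∀ t, f t ∈ E (ι t)) ∧
      IsMatching (Finset.image f Finset.univ) := by
  have : Nonempty (Fin (3 * k - 2)) := ⟨⟨0, by lia⟩⟩
  obtain ⟨col, H, hH, hkH⟩ := exists_isRainbow_le_nu (k := k)
    (by rw [Fintype.card_fin]; lia) hne hsimple fun i j hij => by convert hnu i j hij
  obtain ⟨N, hN⟩ := exists_isMaxMatching H
  obtain ⟨M, hMN, hM⟩ := Finset.exists_subset_card_eq (hN.card_eq ▸ hkH)
  have hMH := hMN.trans hN.subset
  let f : Fin k ≃ M := (M.equivFinOfCardEq hM).symm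
  refine ⟨fun t => f t, fun t => col (f t), Subtype.val_injective.comp f.injective, ?_,
    fun t => hH.2 _ (hMH (f t).2), hN.isMatching.mono fun e he => ?_⟩
  · exact fun s t hst => f.injective (Subtype.ext (hH.1 (hMH (f s).2) (hMH (f t).2) hst))
  · obtain ⟨t, -, rfl⟩ := Finset.mem_image.1 he
    exact hMN (f t).2
end

section
/- Let k ≥ 2 and let E₁, …, E_{2k-1} be non-empty edge subsets of a bipartite graph such that ν(E_i ∪ E_j) ≥ k for every i ≠ j. Then E = ⋃ E_i contains a rainbow matching of size k. -/
attribute [local instance] Classical.propDecidable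

/-!
Suppose a rainbow matching of size `m < k` does not extend, and keep its right ends fixed. As two
unused colours together cannot be covered by `m` vertices, one can repeatedly pick an edge of an
unused colour from a left vertex that can be left unmatched to a right vertex not yet reached. By
maximality the latter is an end of the matching, and rotating along the edge makes one more left
end avoidable at the cost of one more colour. After `m` rounds at most `2 * m` colours are in use
and every left vertex is avoidable, so all edges of a colour `z` that is still free end in the `m`
right ends; moreover `z` can be rotated into the matching. Starting again from the rotated matching
gives a second such colour `w ≠ z`, and then the right ends cover `E z ∪ E w` with only `m`
vertices.
-/

section Rotation

open Function Set

variable {A B I T : Type*} {E : I → Set (A × B)} {m : ℕ}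

/-- A rainbow matching indexed by `T` in a family of edge sets of a bipartite graph with
classes `A` and `B`: its edges are the pairs `(a t, b t)`, and `c t` is the colour of the edge
`(a t, b t)`. -/
structure IsRainbowMatching (E : I → Set (A × B)) (a : T → A) (b : T → B)
    (c : T → I) : Prop where
  left_injective : Injective a
  right_injective : Injective b
  color_injective : Injective c
  mem : ∀ t, (a t, b t) ∈ E (c t)

/-- The existence of a rainbow matching of size `m`. -/
def HasRainbowMatching (E : I → Set (A × B)) (m : ℕ) : Prop :=
  ∃ (a : Fin m → A) (b : Fin m → B) (c : Fin m → I), IsRainbowMatching E a b c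

/-- The existence of a vertex cover with at most `m` vertices. -/
def HasVertexCover (m : ℕ) (F : Set (A × B)) : Prop :=
  ∃ (S : Finset A) (P : Finset B), S.card + P.card ≤ m ∧ ∀ e ∈ F, e.1 ∈ S ∨ e.2 ∈ P

/-- With the right ends `b` fixed, every left vertex that `a` does not match at an index outside
`R` can be avoided by a rainbow matching that agrees with `a` outside `R` and uses only colours
from `U`. -/
def IsRotatable (E : I → Set (A × B)) (a : T → A) (b : T → B) (R : Finset T) (U : Finset I) :
    Prop :=
  ∀ p, (∀ t ∉ R, a t ≠ p) → ∃ a' c', IsRainbowMatching E a' b c' ∧ p ∉ range a' ∧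
    (∀ t ∉ R, a' t = a t) ∧ ∀ t, c' t ∈ U

theorem injective_update_of_notMem_range [DecidableEq T] {X : Type*} {f : T → X}
    (hf : Injective f) {x : X} (hx : x ∉ range f) (y : T) : Injective (update f y x) := by
  intro s t hst
  simp only [update_apply] at hst
  split_ifs at hst with hs ht ht
  · exact hs.trans ht.symm
  · exact absurd ⟨t, hst.symm⟩ hx
  · exact absurd ⟨s, hst⟩ hx
  · exact hf hst

namespace IsRainbowMatching

theorem update [DecidableEq T] {a : T → A} {b : T → B} {c : T → I}
    (h : IsRainbowMatching E a b c) {p : A} {y : T} {i : I} (hp : p ∉ range a)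
    (hi : i ∉ range c) (hmem : (p, b y) ∈ E i) :
    IsRainbowMatching E (update a y p) b (update c y i) where
  left_injective := injective_update_of_notMem_range h.left_injective hp y
  right_injective := h.right_injective
  color_injective := injective_update_of_notMem_range h.color_injective hi y
  mem t := by
    obtain rfl | ht := eq_or_ne t y
    · simpa only [update_self] using hmem
    · simpa only [update_of_ne ht] using h.mem t

theorem cons {a : Fin m → A} {b : Fin m → B} {c : Fin m → I} (h : IsRainbowMatching E a b c)
    {p : A} {q : B} {i : I} (hp : p ∉ range a) (hq : q ∉ range b) (hi : i ∉ range c)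
    (hmem : (p, q) ∈ E i) :
    IsRainbowMatching E (Fin.cons p a : Fin (m + 1) → A) (Fin.cons q b : Fin (m + 1) → B)
      (Fin.cons i c : Fin (m + 1) → I) where
  left_injective := Fin.cons_injective_of_injective hp h.left_injective
  right_injective := Fin.cons_injective_of_injective hq h.right_injective
  color_injective := Fin.cons_injective_of_injective hi h.color_injective
  mem := Fin.cases hmem h.mem

theorem isRotatable_empty [Fintype T] [DecidableEq I] {a : T → A} {b : T → B} {c : T → I}
    (h : IsRainbowMatching E a b c) : IsRotatable E a b ∅ (Finset.univ.image c) := fun _ hp =>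
  ⟨a, c, h, fun ⟨t, ht⟩ => hp t (Finset.notMem_empty t) ht, fun _ _ => rfl,
    fun t => Finset.mem_image_of_mem c (Finset.mem_univ t)⟩

end IsRainbowMatching

namespace IsRotatable

theorem insert [DecidableEq T] [DecidableEq I] {a : T → A} {b : T → B} {R : Finset T} {U : Finset I}
    (h : IsRotatable E a b R U) {p : A} {y : T} {l : I} (hp : ∀ t ∉ R, a t ≠ p) (hy : y ∉ R)
    (hl : l ∉ U) (hmem : (p, b y) ∈ E l) :
    IsRotatable E a b (insert y R) (insert l U) := by
  intro x hx
  simp only [Finset.mem_insert, not_or, and_imp] at hx ⊢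
  obtain rfl | hxy := eq_or_ne (a y) x
  · obtain ⟨a', c', h', hpa', ha', hc'⟩ := h p hp
    refine ⟨_, _, h'.update hpa' (fun ⟨t, ht⟩ => hl (ht ▸ hc' t)) hmem, ?_, ?_, ?_⟩
    · rintro ⟨t, ht⟩
      obtain rfl | hty := eq_or_ne t y
      · exact hp t hy (by rw [← ht, update_self])
      · rw [update_of_ne hty, ← ha' y hy] at ht
        exact hty (h'.left_injective ht)
    · exact fun t hty ht => by rw [update_of_ne hty, ha' t ht]
    · intro t
      obtain rfl | hty := eq_or_ne t y
      · exact .inl (update_self ..)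
      · exact .inr (by simpa only [update_of_ne hty] using hc' t)
  · obtain ⟨a', c', h', hxa', ha', hc'⟩ := h x fun t ht =>
      (eq_or_ne t y).elim (fun hty => hty ▸ hxy) fun hty => hx t hty ht
    exact ⟨a', c', h', hxa', fun t _ ht => ha' t ht, fun t => .inr (hc' t)⟩

theorem mem_range_of_not_hasRainbowMatching {a : Fin m → A} {b : Fin m → B} {R : Finset (Fin m)}
    {U : Finset I} (h : IsRotatable E a b R U) (hmax : ¬ HasRainbowMatching E (m + 1)) {p : A}
    {q : B} {l : I} (hp : ∀ t ∉ R, a t ≠ p) (hl : l ∉ U) (hmem : (p, q) ∈ E l) :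
    q ∈ range b := by
  by_contra hq
  obtain ⟨a', c', h', hpa', -, hc'⟩ := h p hp
  exact hmax ⟨_, _, _, h'.cons hpa' hq (fun ⟨t, ht⟩ => hl (ht ▸ hc' t)) hmem⟩

end IsRotatable

theorem exists_mem_fresh_color_of_not_hasVertexCover (hI : (2 * m : ℕ) < ENat.card I)
    (hcov : Pairwise fun i j => ¬ HasVertexCover m (E i ∪ E j)) {U : Finset I}
    (hU : U.card < 2 * m) {S : Finset A} {P : Finset B} (hSP : S.card + P.card ≤ m) :
    ∃ p q, p ∉ S ∧ q ∉ P ∧ ∃ l ∉ U, (p, q) ∈ E l := by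
  obtain ⟨i, hi⟩ := Finset.exists_not_mem_of_card_lt_enatCard
    ((Nat.cast_lt.2 hU).trans hI)
  obtain ⟨j, hj⟩ := Finset.exists_not_mem_of_card_lt_enatCard (s := insert i U)
    ((Nat.cast_le.2 ((Finset.card_insert_le i U).trans hU)).trans_lt hI)
  rw [Finset.mem_insert, not_or] at hj
  by_contra! hall
  refine hcov hj.1 ⟨S, P, hSP, fun ⟨p, q⟩ he => ?_⟩
  by_contra! hpq
  exact he.elim (hall p q hpq.1 hpq.2 j hj.2) (hall p q hpq.1 hpq.2 i hi)

theorem IsRainbowMatching.exists_isRotatable_card_eq {a : Fin m → A} {b : Fin m → B}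
    {c : Fin m → I} (h : IsRainbowMatching E a b c) (hmax : ¬ HasRainbowMatching E (m + 1))
    (hI : (2 * m : ℕ) < ENat.card I)
    (hcov : Pairwise fun i j => ¬ HasVertexCover m (E i ∪ E j)) {r : ℕ} (hr : r ≤ m) :
    ∃ R U, R.card = r ∧ U.card ≤ r + m ∧ (∀ t, c t ∈ U) ∧ IsRotatable E a b R U := by
  induction r with
  | zero =>
    refine ⟨∅, Finset.univ.image c, rfl, ?_, ?_, h.isRotatable_empty⟩
    · simpa using Finset.card_image_le (s := Finset.univ) (f := c)
    · exact fun t => Finset.mem_image_of_mem c (Finset.mem_univ t)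
  | succ r ih =>
    obtain ⟨R, U, hR, hU, hcU, hrot⟩ := ih (by lia)
    have hcard : (Rᶜ.image a).card + (R.image b).card ≤ m := calc
      _ ≤ Rᶜ.card + R.card := add_le_add Finset.card_image_le Finset.card_image_le
      _ = m := by rw [Finset.card_compl_add_card, Fintype.card_fin]
    obtain ⟨p, q, hp, hq, l, hl, hmem⟩ :=
      exists_mem_fresh_color_of_not_hasVertexCover hI hcov (U := U) (by lia) hcard
    have hp' : ∀ t ∉ R, a t ≠ p := fun t ht hat =>
      hp (Finset.mem_image.2 ⟨t, Finset.mem_compl.2 ht, hat⟩)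
    obtain ⟨y, rfl⟩ := hrot.mem_range_of_not_hasRainbowMatching hmax hp' hl hmem
    have hy : y ∉ R := fun hy => hq (Finset.mem_image_of_mem b hy)
    refine ⟨insert y R, insert l U, ?_, ?_, ?_, hrot.insert hp' hy hl hmem⟩
    · rw [Finset.card_insert_of_notMem hy, hR]
    · exact (Finset.card_insert_le l U).trans (by lia)
    · exact fun t => Finset.mem_insert_of_mem (hcU t)

theorem IsRainbowMatching.exists_color_confined {a : Fin m → A} {b : Fin m → B} {c : Fin m → I}
    (h : IsRainbowMatching E a b c) (hmax : ¬ HasRainbowMatching E (m + 1))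
    (hI : (2 * m : ℕ) < ENat.card I) (hne : ∀ i, (E i).Nonempty)
    (hcov : Pairwise fun i j => ¬ HasVertexCover m (E i ∪ E j)) :
    ∃ z ∉ range c, (∀ e ∈ E z, e.2 ∈ range b) ∧
      ∃ a' c', IsRainbowMatching E a' b c' ∧ z ∈ range c' := by
  obtain ⟨R, U, hR, hU, hcU, hrot⟩ := h.exists_isRotatable_card_eq hmax hI hcov le_rfl
  obtain rfl : R = Finset.univ := by
    rw [← Finset.card_eq_iff_eq_univ, hR, Fintype.card_fin]
  obtain ⟨z, hz⟩ := Finset.exists_not_mem_of_card_lt_enatCard (s := U)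
    ((Nat.cast_le.2 (by lia)).trans_lt hI)
  have hright : ∀ e ∈ E z, e.2 ∈ range b := fun e he =>
    hrot.mem_range_of_not_hasRainbowMatching hmax (by simp) hz he
  obtain ⟨⟨p, q⟩, hpq⟩ := hne z
  obtain ⟨y, rfl⟩ := hright _ hpq
  obtain ⟨a', c', h', hpa', -, hc'⟩ := hrot p (by simp)
  refine ⟨z, fun ⟨t, ht⟩ => hz (ht ▸ hcU t), hright, _, _,
    h'.update hpa' (fun ⟨t, ht⟩ => hz (ht ▸ hc' t)) hpq, y, update_self ..⟩

theorem HasRainbowMatching.succ (h : HasRainbowMatching E m) (hI : (2 * m : ℕ) < ENat.card I)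
    (hne : ∀ i, (E i).Nonempty) (hcov : Pairwise fun i j => ¬ HasVertexCover m (E i ∪ E j)) :
    HasRainbowMatching E (m + 1) := by
  by_contra hmax
  obtain ⟨a, b, c, h⟩ := h
  obtain ⟨z, -, hz, a', c', h', hzc'⟩ := h.exists_color_confined hmax hI hne hcov
  obtain ⟨w, hwc', hw, -⟩ := h'.exists_color_confined hmax hI hne hcov
  have hzw : z ≠ w := fun hzw => hwc' (hzw ▸ hzc')
  refine hcov hzw ⟨∅, Finset.univ.image b, ?_, fun e he => .inr ?_⟩
  · simpa using Finset.card_image_le (s := Finset.univ) (f := b)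
  · simpa using he.elim (hz e) (hw e)

theorem hasRainbowMatching_of_not_hasVertexCover {n : ℕ}
    (hI : (2 * n - 1 : ℕ) ≤ ENat.card I) (hne : ∀ i, (E i).Nonempty)
    (hcov : Pairwise fun i j => ∀ m < n, ¬ HasVertexCover m (E i ∪ E j)) :
    HasRainbowMatching E n := by
  induction n with
  | zero =>
    exact ⟨Fin.elim0, Fin.elim0, Fin.elim0, injective_of_subsingleton _,
      injective_of_subsingleton _, injective_of_subsingleton _, fun t => t.elim0⟩
  | succ n ih =>
    have hn : HasRainbowMatching E n := ih ((Nat.cast_le.2 (by lia)).trans hI)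
      fun i j hij m hm => hcov hij m (hm.trans n.lt_succ_self)
    exact hn.succ ((Nat.cast_lt.2 (by lia)).trans_le hI) hne
      fun i j hij => hcov hij n n.lt_succ_self

end Rotation

section UnorderedPairs

open Function

variable {V T : Type*} {side : V → Bool}

/-- The edges in `F` that join the two sides, as pairs whose first component is the end on the
side `true`. -/
def orientedEdges (side : V → Bool) (F : Set (Sym2 V)) : Set (V × V) :=
  {e | s(e.1, e.2) ∈ F ∧ side e.1 = true ∧ side e.2 = false}

theorem exists_mem_orientedEdges {F : Set (Sym2 V)} {x y : V} (hF : s(x, y) ∈ F)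
    (hxy : side x ≠ side y) : ∃ e ∈ orientedEdges side F, s(e.1, e.2) = s(x, y) := by
  cases hx : side x
  · exact ⟨(y, x), ⟨Sym2.eq_swap ▸ hF, by simpa [hx] using hxy.symm, hx⟩, Sym2.eq_swap⟩
  · exact ⟨(x, y), ⟨hF, hx, by simpa [hx] using hxy.symm⟩, rfl⟩

theorem orientedEdges_union (F G : Set (Sym2 V)) :
    orientedEdges side (F ∪ G) = orientedEdges side F ∪ orientedEdges side G := by
  ext e
  exact or_and_right

theorem eq_of_mem_mk_of_mem_mk {a b : T → V} (ha : Injective a) (hb : Injective b)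
    (hab : ∀ s t, a s ≠ b t) {s t : T} {v : V} (hs : v ∈ s(a s, b s)) (ht : v ∈ s(a t, b t)) :
    s = t := by
  rw [Sym2.mem_iff] at hs ht
  obtain rfl | rfl := hs <;> obtain h | h := ht
  · exact ha h
  · exact absurd h (hab s t)
  · exact absurd h.symm (hab t s)
  · exact hb h

theorem injective_mk_of_forall_ne {a b : T → V} (ha : Injective a) (hab : ∀ s t, a s ≠ b t) :
    Injective fun t => s(a t, b t) := fun s t hst =>
  (Sym2.eq_iff.1 hst).elim (fun h => ha h.1) fun h => absurd h.1 (hab s t)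

end UnorderedPairs

section Matching

open Function

variable {V : Type} {I T : Type*}

theorem IsMatching.card_le_card_of_forall_exists_mem {M : Finset (Sym2 V)} (hM : IsMatching M)
    {C : Finset V} (hC : ∀ e ∈ M, ∃ v ∈ C, v ∈ e) : M.card ≤ C.card :=
  Finset.card_le_card_of_forall_subsingleton (fun e v => v ∈ e) hC fun v _ e he f hf =>
    by_contra fun hef => hM.2 e he.1 f hf.1 hef v he.2 hf.2

theorem IsMatching.card_le_of_hasVertexCover {M : Finset (Sym2 V)} (hM : IsMatching M)
    {F : Set (Sym2 V)} (hMF : ↑M ⊆ F) {side : V → Bool}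
    (hF : ∀ e ∈ F, ∃ x y, e = s(x, y) ∧ side x ≠ side y) {m : ℕ}
    (hcov : HasVertexCover m (orientedEdges side F)) : M.card ≤ m := by
  obtain ⟨S, P, hSP, hcov⟩ := hcov
  refine (hM.card_le_card_of_forall_exists_mem (C := S ∪ P) fun e he => ?_).trans
    ((Finset.card_union_le S P).trans hSP)
  obtain ⟨x, y, rfl, hxy⟩ := hF e (hMF he)
  obtain ⟨⟨p, q⟩, hpq, heq⟩ := exists_mem_orientedEdges (hMF he) hxy
  rw [← heq]
  obtain hp | hq := hcov _ hpq
  · exact ⟨p, Finset.mem_union_left P hp, Sym2.mem_mk_left p q⟩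
  · exact ⟨q, Finset.mem_union_right S hq, Sym2.mem_mk_right p q⟩

theorem isMatching_image_mk [DecidableEq V] [Fintype T] {a b : T → V} (ha : Injective a)
    (hb : Injective b) (hab : ∀ s t, a s ≠ b t) :
    IsMatching (Finset.univ.image fun t => s(a t, b t)) := by
  simp only [IsMatching, Finset.mem_image, Finset.mem_univ, true_and, forall_exists_index,
    forall_apply_eq_imp_iff, Sym2.mk_isDiag_iff]
  exact ⟨fun t => hab t t, fun s t hst v hs ht =>
    hst (by rw [eq_of_mem_mk_of_mem_mk ha hb hab hs ht])⟩

theorem exists_isMatching_of_le_nu {F : Finset (Sym2 V)} {k : ℕ} (h : k ≤ nu F) :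
    ∃ M ⊆ F, IsMatching M ∧ k ≤ M.card := by
  have hne : (F.powerset.filter fun M => IsMatching M).Nonempty :=
    ⟨∅, Finset.mem_filter.2 ⟨Finset.empty_mem_powerset F, by simp [IsMatching]⟩⟩
  obtain ⟨M, hM, hcard⟩ := Finset.exists_mem_eq_sup _ hne Finset.card
  rw [Finset.mem_filter, Finset.mem_powerset] at hM
  exact ⟨M, hM.1, hM.2, h.trans hcard.le⟩

theorem rainbow_matching_bipartite_general [DecidableEq V] {k : ℕ}
    (hI : (2 * k - 1 : ℕ) ≤ ENat.card I) (side : V → Bool) (E : I → Set (Sym2 V))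
    (hne : ∀ i, (E i).Nonempty)
    (hbip : ∀ i, ∀ e ∈ E i, ∃ x y, e = s(x, y) ∧ side x ≠ side y)
    (hmatch : ∀ i j, i ≠ j → ∃ M : Finset (Sym2 V), ↑M ⊆ E i ∪ E j ∧ IsMatching M ∧ k ≤ M.card) :
    ∃ (f : Fin k → Sym2 V) (ι : Fin k → I), Injective f ∧ Injective ι ∧
      (∀ t, f t ∈ E (ι t)) ∧ IsMatching (Finset.image f Finset.univ) := by
  have hne' : ∀ i, (orientedEdges side (E i)).Nonempty := fun i => by
    obtain ⟨e, he⟩ := hne i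
    obtain ⟨x, y, rfl, hxy⟩ := hbip i e he
    exact (exists_mem_orientedEdges he hxy).imp fun _ h => h.1
  have hcov : Pairwise fun i j => ∀ m < k,
      ¬ HasVertexCover m (orientedEdges side (E i) ∪ orientedEdges side (E j)) := by
    intro i j hij m hm hcov
    obtain ⟨M, hME, hM, hkM⟩ := hmatch i j hij
    rw [← orientedEdges_union] at hcov
    exact (hkM.trans <| hM.card_le_of_hasVertexCover hME
      (fun e he => he.elim (hbip i e) (hbip j e)) hcov).not_gt hm
  obtain ⟨a, b, c, h⟩ := hasRainbowMatching_of_not_hasVertexCover hI hne' hcov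
  have hab : ∀ s t, a s ≠ b t := fun s t hst =>
    Bool.false_ne_true ((h.mem t).2.2.symm.trans (hst ▸ (h.mem s).2.1))
  exact ⟨_, c, injective_mk_of_forall_ne h.left_injective hab, h.color_injective,
    fun t => (h.mem t).1, isMatching_image_mk h.left_injective h.right_injective hab⟩

end Matching

/-- Let `k ≥ 2` and let `E₁, …, E_{2k-1}` be non-empty edge subsets of a bipartite graph
(with bipartition given by `side`) such that `ν(E_i ∪ E_j) ≥ k` for every `i ≠ j`.
Then `⋃ E_i` contains a rainbow matching of size `k`. -/
theorem rainbow_matching_bipartite {V : Type} [DecidableEq V] (k : ℕ) (hk : 2 ≤ k)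
    (side : V → Bool)
    (E : Fin (2 * k - 1) → Finset (Sym2 V))
    (hne : ∀ i, (E i).Nonempty)
    (hbip : ∀ i, ∀ e ∈ E i, ∃ x y, e = s(x, y) ∧ side x ≠ side y)
    (hnu : ∀ i j, i ≠ j → k ≤ nu (E i ∪ E j)) :
    ∃ (f : Fin k → Sym2 V) (ι : Fin k → Fin (2 * k - 1)),
      Function.Injective f ∧ Function.Injective ι ∧
      (∀ t, f t ∈ E (ι t)) ∧
      IsMatching (Finset.image f Finset.univ) :=
  rainbow_matching_bipartite_general (k := k) (by simp) side (fun i => ↑(E i)) hne hbip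
    fun i j hij => by exact_mod_cast exists_isMatching_of_le_nu (hnu i j hij)
end

section
/- Let k ≥ 2 and let G be a bipartite graph. The non-matching complex NM_k(G) has vanishing reduced homology (over any field) in all dimensions d ≥ 2k - 2. -/
attribute [local instance] Classical.propDecidable

variable {W : Type} [LinearOrder W] (F : Type) [Field F]

/-- The simplicial boundary operator on formal `F`-linear combinations of finite sets
(faces `s` of cardinality `n` being generators in degree `n`; the empty face is the
generator of the augmentation degree, so this computes *reduced* homology). -/
noncomputable def bdry (x : Finset W →₀ F) : Finset W →₀ F :=
  x.sum fun s a =>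
    ∑ v ∈ s, (a * (-1 : F) ^ (s.filter fun w => w < v).card) • Finsupp.single (s.erase v) (1 : F)

/-- The reduced homology (with coefficients in `F`) of the complex `K` vanishes in
dimension `d`: every reduced `d`-cycle of `K` is a boundary of a `(d+1)`-chain of `K`.
(A face of dimension `d` has cardinality `d + 1`.) -/
def VanishesAt (K : Finset (Finset W)) (d : ℕ) : Prop :=
  ∀ x : Finset W →₀ F, (∀ s ∈ x.support, s ∈ K ∧ s.card = d + 1) → bdry F x = 0 →
    ∃ y : Finset W →₀ F, (∀ s ∈ y.support, s ∈ K ∧ s.card = d + 2) ∧ bdry F y = x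

/-- The link of a face `σ` in the complex `K`. -/
noncomputable def linkOf (K : Finset (Finset W)) (σ : Finset W) : Finset (Finset W) :=
  K.filter fun τ => Disjoint τ σ ∧ τ ∪ σ ∈ K

/-- The non-matching complex `NM_k(G)` of the graph with edge set `E`: the family of
edge subsets whose matching number is `< k`. -/
noncomputable def NM {V : Type} (k : ℕ) (E : Finset (Sym2 V)) : Finset (Finset (Sym2 V)) :=
  E.powerset.filter fun σ => nu σ < k

/-!
Wegner: if a simplicial complex is `n`-collapsible, deleting a face `L` of at most `n` elements
that lies in a unique facet does not change homology in dimension `≥ n`, so all of that homology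
vanishes. Here `NM k E` is `(2k - 2)`-collapsible.

Consider, for an edge set `τ`, the fractional vertex cover program: minimise `∑ v, c v * x v`
subject to `x ≥ 0` and `x a + x b ≥ w ab` for `ab ∈ τ`, where `c` and `w` are generic and within
a small `δ` above `1`. Its optimum `x` is then unique, and the edge sets with optimum `x` are
those between the set of tight edges and the set of satisfied edges of `x`: the complex is
partitioned into Boolean intervals, which can be collapsed in order of decreasing optimal value.

* The bottom of an interval is small: by nondegeneracy the tight edges are at most as many as the
  positive vertices, and by Hall's theorem the positive vertices on each side can be matched along
  tight edges of `τ`. This gives at most `2 * nu τ ≤ 2k - 2` tight edges.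
* An interval stays inside the complex: rounding `x` at a suitable threshold yields an integral
  cover of every edge set in the interval, and again by Hall this cover can be matched in `τ`, so
  that no set in the interval has a larger matching number than `τ`.
-/

section Homology

/-- The incidence sign of the vertex `v` in the face `s`. -/
noncomputable def faceSign (s : Finset W) (v : W) : F :=
  (-1) ^ (s.filter fun w => w < v).card

/-- `bdry` as a linear map. -/
noncomputable def boundary : (Finset W →₀ F) →ₗ[F] (Finset W →₀ F) :=
  Finsupp.linearCombination F fun s =>
    ∑ v ∈ s, faceSign F s v • Finsupp.single (s.erase v) 1

/-- The cone operator with apex `e`, which joins `e` to the faces that do not contain it and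
kills the others. -/
noncomputable def coneMap (e : W) : (Finset W →₀ F) →ₗ[F] (Finset W →₀ F) :=
  Finsupp.linearCombination F fun s =>
    if e ∈ s then 0 else faceSign F (insert e s) e • Finsupp.single (insert e s) 1

lemma bdry_eq_boundary (x : Finset W →₀ F) : bdry F x = boundary F x := by
  rw [boundary, Finsupp.linearCombination_apply]
  refine Finsupp.sum_congr fun s _ => ?_
  simp only [Finset.smul_sum, smul_smul, faceSign]

lemma boundary_single (s : Finset W) : boundary F (Finsupp.single s 1) =
    ∑ v ∈ s, faceSign F s v • Finsupp.single (s.erase v) 1 := by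
  simp only [boundary, Finsupp.linearCombination_single, one_smul]

lemma coneMap_single_of_mem {e : W} {s : Finset W} (he : e ∈ s) :
    coneMap F e (Finsupp.single s 1) = 0 := by
  simp [coneMap, he]

lemma coneMap_single_of_notMem {e : W} {s : Finset W} (he : e ∉ s) :
    coneMap F e (Finsupp.single s 1) =
      faceSign F (insert e s) e • Finsupp.single (insert e s) 1 := by
  simp [coneMap, he]

lemma faceSign_mul_self (s : Finset W) (v : W) : faceSign F s v * faceSign F s v = 1 := by
  rw [faceSign, ← mul_pow, neg_one_mul, neg_neg, one_pow]

lemma faceSign_erase_of_lt {s : Finset W} {u v : W} (huv : u < v) :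
    faceSign F (s.erase v) u = faceSign F s u := by
  rw [faceSign, Finset.filter_erase, Finset.erase_eq_of_notMem, faceSign]
  simp [huv.le]

lemma faceSign_eq_neg_erase_of_lt {s : Finset W} {u v : W} (hu : u ∈ s) (huv : u < v) :
    faceSign F s v = -faceSign F (s.erase u) v := by
  have hcard : (s.filter fun w => w < v).card = ((s.erase u).filter fun w => w < v).card + 1 := by
    rw [Finset.filter_erase, Finset.card_erase_add_one (by simp [hu, huv])]
  rw [faceSign, hcard, pow_succ, mul_neg_one, faceSign]

lemma faceSign_mul_erase_add {s : Finset W} {u v : W} (hu : u ∈ s) (hv : v ∈ s) (huv : u ≠ v) :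
    faceSign F s v * faceSign F (s.erase v) u + faceSign F s u * faceSign F (s.erase u) v = 0 := by
  wlog hlt : u < v generalizing u v
  · rw [add_comm]
    exact this hv hu huv.symm (lt_of_le_of_ne (not_lt.1 hlt) huv.symm)
  rw [faceSign_erase_of_lt F hlt, faceSign_eq_neg_erase_of_lt F hu hlt]
  ring

lemma faceSign_mul_faceSign_add {s : Finset W} {u v : W} (hu : u ∈ s) (hv : v ∈ s)
    (huv : u ≠ v) :
    faceSign F s u * faceSign F s v + faceSign F (s.erase u) v * faceSign F (s.erase v) u = 0 := by
  have h := faceSign_mul_erase_add F hu hv huv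
  have hu1 := faceSign_mul_self F s u
  have hv1 := faceSign_mul_self F (s.erase v) u
  linear_combination faceSign F s u * faceSign F (s.erase v) u * h -
    faceSign F s u * faceSign F s v * hv1 -
    faceSign F (s.erase u) v * faceSign F (s.erase v) u * hu1

lemma boundary_boundary_single (s : Finset W) :
    boundary F (boundary F (Finsupp.single s 1)) = 0 := by
  simp only [boundary_single, map_sum, map_smul, Finset.smul_sum, smul_smul]
  rw [Finset.sum_sigma']
  refine Finset.sum_involution (fun p _ => ⟨p.2, p.1⟩) ?_ ?_ ?_ fun _ _ => rfl
  · rintro ⟨v, u⟩ h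
    simp only [Finset.mem_sigma, Finset.mem_erase] at h
    rw [Finset.erase_right_comm (a := u), ← add_smul,
      faceSign_mul_erase_add F h.2.2 h.1 h.2.1, zero_smul]
  · rintro ⟨v, u⟩ h _ heq
    simp only [Finset.mem_sigma, Finset.mem_erase] at h
    exact h.2.1 (congrArg Sigma.fst heq)
  · rintro ⟨v, u⟩ h
    simp only [Finset.mem_sigma, Finset.mem_erase] at h ⊢
    exact ⟨h.2.2, h.2.1.symm, h.1⟩

lemma boundary_boundary (x : Finset W →₀ F) : boundary F (boundary F x) = 0 := by
  have h : boundary F ∘ₗ boundary F = (0 : (Finset W →₀ F) →ₗ[F] (Finset W →₀ F)) :=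
    Finsupp.lhom_ext' fun s => LinearMap.ext_ring (boundary_boundary_single F s)
  exact LinearMap.congr_fun h x

lemma boundary_coneMap_add_coneMap_boundary_single (e : W) (s : Finset W) :
    boundary F (coneMap F e (Finsupp.single s 1)) + coneMap F e (boundary F (Finsupp.single s 1)) =
      Finsupp.single s 1 := by
  rw [boundary_single, map_sum]
  simp only [map_smul]
  by_cases he : e ∈ s
  · have hne : ∀ v ∈ s, v ≠ e →
        faceSign F s v • coneMap F e (Finsupp.single (s.erase v) 1) = 0 := fun v _ hv => by
      rw [coneMap_single_of_mem F (Finset.mem_erase.2 ⟨hv.symm, he⟩), smul_zero]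
    rw [coneMap_single_of_mem F he, map_zero, zero_add,
      Finset.sum_eq_single_of_mem e he hne, coneMap_single_of_notMem F (Finset.notMem_erase e s),
      Finset.insert_erase he, smul_smul, faceSign_mul_self, one_smul]
  · have hcancel : ∀ v ∈ s,
        faceSign F (insert e s) e • faceSign F (insert e s) v •
            Finsupp.single ((insert e s).erase v) (1 : F) +
          faceSign F s v • coneMap F e (Finsupp.single (s.erase v) 1) = 0 := by
      intro v hv
      have hev : e ≠ v := fun h => he (h ▸ hv)
      have hsign := faceSign_mul_faceSign_add F (Finset.mem_insert_self e s)
        (Finset.mem_insert_of_mem hv) hev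
      rw [Finset.erase_insert he, Finset.erase_insert_of_ne hev] at hsign
      rw [coneMap_single_of_notMem F fun h => he (Finset.mem_of_mem_erase h),
        Finset.erase_insert_of_ne hev, smul_smul, smul_smul, ← add_smul, hsign, zero_smul]
    rw [coneMap_single_of_notMem F he, map_smul, boundary_single, Finset.sum_insert he, smul_add,
      Finset.smul_sum, add_assoc, ← Finset.sum_add_distrib, Finset.sum_eq_zero hcancel, add_zero,
      Finset.erase_insert he, smul_smul, faceSign_mul_self, one_smul]

lemma boundary_coneMap_add_coneMap_boundary (e : W) (x : Finset W →₀ F) :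
    boundary F (coneMap F e x) + coneMap F e (boundary F x) = x := by
  have h : boundary F ∘ₗ coneMap F e + coneMap F e ∘ₗ boundary F = LinearMap.id :=
    Finsupp.lhom_ext' fun s =>
      LinearMap.ext_ring (boundary_coneMap_add_coneMap_boundary_single F e s)
  exact LinearMap.congr_fun h x

variable {F}

lemma linearCombination_mem_of_mem_supported {α M : Type*} [AddCommGroup M] [Module F M]
    {f : α → M} {A : Set α} {N : Submodule F M} (hf : ∀ a ∈ A, f a ∈ N) {x : α →₀ F}
    (hx : x ∈ Finsupp.supported F F A) : Finsupp.linearCombination F f x ∈ N :=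
  Submodule.sum_mem _ fun a ha =>
    N.smul_mem _ (hf a ((Finsupp.mem_supported F x).1 hx ha))

lemma boundary_mem_supported {A B : Set (Finset W)} (h : ∀ s ∈ A, ∀ v ∈ s, s.erase v ∈ B)
    {x : Finset W →₀ F} (hx : x ∈ Finsupp.supported F F A) :
    boundary F x ∈ Finsupp.supported F F B :=
  linearCombination_mem_of_mem_supported (fun s hs => Submodule.sum_mem _ fun v hv =>
    Submodule.smul_mem _ _ (Finsupp.single_mem_supported F 1 (h s hs v hv))) hx

lemma coneMap_mem_supported {e : W} {A B : Set (Finset W)}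
    (h : ∀ s ∈ A, e ∉ s → insert e s ∈ B) {x : Finset W →₀ F}
    (hx : x ∈ Finsupp.supported F F A) : coneMap F e x ∈ Finsupp.supported F F B := by
  refine linearCombination_mem_of_mem_supported (fun s hs => ?_) hx
  split_ifs with he
  · exact Submodule.zero_mem _
  · exact Submodule.smul_mem _ _ (Finsupp.single_mem_supported F 1 (h s hs he))

lemma vanishesAt_iff {K : Finset (Finset W)} {d : ℕ} : VanishesAt F K d ↔
    ∀ x ∈ Finsupp.supported F F {s | s ∈ K ∧ s.card = d + 1}, boundary F x = 0 →
      ∃ y ∈ Finsupp.supported F F {s | s ∈ K ∧ s.card = d + 2}, boundary F y = x := by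
  simp only [VanishesAt, bdry_eq_boundary, Finsupp.mem_supported, Set.subset_def, Finset.mem_coe,
    Set.mem_ofPred_eq]

lemma vanishesAt_empty (d : ℕ) : VanishesAt F (∅ : Finset (Finset W)) d := by
  intro x hx _
  have hx0 : x = 0 := Finsupp.support_eq_empty.1
    (Finset.eq_empty_of_forall_notMem fun s hs => Finset.notMem_empty s (hx s hs).1)
  exact ⟨0, by simp, by simp [hx0, bdry_eq_boundary]⟩

lemma VanishesAt.of_collapse_facet {K : Finset (Finset W)} {d : ℕ} {L : Finset W}
    (hL : ∀ s ∈ K, L ⊆ s → s = L) (hd : L.card ≤ d)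
    (h : VanishesAt F {s ∈ K | ¬ L ⊆ s} d) : VanishesAt F K d := by
  intro x hx hbx
  have hxL : ∀ s ∈ x.support, ¬ L ⊆ s := fun s hs hLs => by
    have hcard := (hx s hs).2
    rw [hL s (hx s hs).1 hLs] at hcard
    omega
  obtain ⟨y, hy, hyx⟩ := h x
    (fun s hs => ⟨Finset.mem_filter.2 ⟨(hx s hs).1, hxL s hs⟩, (hx s hs).2⟩) hbx
  exact ⟨y, fun s hs => ⟨(Finset.mem_filter.1 (hy s hs).1).1, (hy s hs).2⟩, hyx⟩

lemma filter_mem_supported {α : Type*} {A : Set α} {x : α →₀ F}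
    (hx : x ∈ Finsupp.supported F F A) (p : α → Prop) [DecidablePred p] :
    x.filter p ∈ Finsupp.supported F F {a | a ∈ A ∧ p a} := by
  intro a ha
  rw [Finsupp.support_filter, Finset.mem_coe, Finset.mem_filter] at ha
  exact ⟨(Finsupp.mem_supported F x).1 hx ha.1, ha.2⟩

/-- If `x = z + x'` is the decomposition of a cycle into its parts above and not above `L`, then
`x - ∂ (cone z) = x' + cone (∂ z)`, and `∂ z = -∂ x'` lives on faces that are not above `L`. -/
lemma exists_sub_boundary_mem_supported {K : Finset (Finset W)} {d : ℕ} {L : Finset W} {e : W}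
    (hK : IsLowerSet (K : Set (Finset W))) (heL : e ∉ L)
    (hcone : ∀ s ∈ K, L ⊆ s → insert e s ∈ K) {x : Finset W →₀ F}
    (hx : x ∈ Finsupp.supported F F {s | s ∈ K ∧ s.card = d + 1}) (hbx : boundary F x = 0) :
    ∃ c ∈ Finsupp.supported F F {s | s ∈ K ∧ s.card = d + 2},
      x - boundary F c ∈ Finsupp.supported F F {s | (s ∈ K ∧ s.card = d + 1) ∧ ¬ L ⊆ s} := by
  set z := x.filter fun s => L ⊆ s
  set x' := x.filter fun s => ¬ L ⊆ s
  have hzx : z + x' = x := Finsupp.filter_add_filter_not x _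
  have hz : z ∈ Finsupp.supported F F {s | (s ∈ K ∧ s.card = d + 1) ∧ L ⊆ s} :=
    filter_mem_supported hx _
  have hx' : x' ∈ Finsupp.supported F F {s | (s ∈ K ∧ s.card = d + 1) ∧ ¬ L ⊆ s} :=
    filter_mem_supported hx _
  have hbz : boundary F z ∈ Finsupp.supported F F
      ({t | insert e t ∈ K ∧ t.card = d} ∩ {t | ¬ L ⊆ t}) := by
    rw [Finsupp.supported_inter]
    refine Submodule.mem_inf.2 ⟨boundary_mem_supported (fun s hs v hv => ?_) hz, ?_⟩
    · exact ⟨hK (Finset.insert_subset_insert e (Finset.erase_subset v s)) (hcone s hs.1.1 hs.2),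
        by rw [Finset.card_erase_of_mem hv, hs.1.2, Nat.add_sub_cancel]⟩
    · have hbzx' : boundary F z = -boundary F x' := by
        rw [eq_neg_iff_add_eq_zero, ← map_add, hzx, hbx]
      rw [hbzx']
      exact Submodule.neg_mem _ (boundary_mem_supported
        (fun s hs v _ hL => hs.2 (hL.trans (Finset.erase_subset v s))) hx')
  have hhom : x - boundary F (coneMap F e z) = x' + coneMap F e (boundary F z) := by
    rw [sub_eq_iff_eq_add, add_assoc, add_comm (coneMap F e _),
      boundary_coneMap_add_coneMap_boundary, add_comm, hzx]
  refine ⟨coneMap F e z, coneMap_mem_supported (fun s hs hes => ?_) hz,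
    hhom ▸ Submodule.add_mem _ hx' (coneMap_mem_supported (fun t ht het => ?_) hbz)⟩
  · exact ⟨hcone s hs.1.1 hs.2, by rw [Finset.card_insert_of_notMem hes, hs.1.2]⟩
  · exact ⟨⟨ht.1.1, by rw [Finset.card_insert_of_notMem het, ht.1.2]⟩,
      fun hL => ht.2 ((Finset.subset_insert_iff_of_notMem heL).1 hL)⟩

lemma VanishesAt.of_collapse_cone {K : Finset (Finset W)} {d : ℕ} {L : Finset W} {e : W}
    (hK : IsLowerSet (K : Set (Finset W))) (heL : e ∉ L)
    (hcone : ∀ s ∈ K, L ⊆ s → insert e s ∈ K)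
    (h : VanishesAt F {s ∈ K | ¬ L ⊆ s} d) : VanishesAt F K d := by
  rw [vanishesAt_iff] at h ⊢
  intro x hx hbx
  obtain ⟨c, hc, hxc⟩ := exists_sub_boundary_mem_supported hK heL hcone hx hbx
  obtain ⟨y, hyK, hy⟩ := h (x - boundary F c)
    (fun s hs => ⟨Finset.mem_filter.2 ⟨(hxc hs).1.1, (hxc hs).2⟩, (hxc hs).1.2⟩)
    (by rw [map_sub, boundary_boundary, hbx, sub_zero])
  refine ⟨y + c, Submodule.add_mem _ (fun s hs => ?_) hc, ?_⟩
  · exact ⟨(Finset.mem_filter.1 (hyK hs).1).1, (hyK hs).2⟩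
  · rw [map_add, hy, sub_add_cancel]

end Homology

section Collapse

/-- Wegner's `n`-collapsibility: the family can be emptied by repeatedly choosing a set `L` of
at most `n` elements contained in a unique maximal member `Z`, and deleting all members above `L`.
Since `n` bounds cardinalities, it is one more than the dimension of the deleted faces `L`. -/
inductive IsCollapsible {α : Type*} (n : ℕ) : Finset (Finset α) → Prop
  | empty : IsCollapsible n ∅
  | collapse {K : Finset (Finset α)} {L Z : Finset α} (hLZ : L ⊆ Z) (hZ : Z ∈ K)
      (hL : L.card ≤ n) (hmax : ∀ s ∈ K, L ⊆ s → s ⊆ Z)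
      (h : IsCollapsible n {s ∈ K | ¬ L ⊆ s}) : IsCollapsible n K

theorem IsCollapsible.vanishesAt {K : Finset (Finset W)} {n d : ℕ} (h : IsCollapsible n K)
    (hK : IsLowerSet (K : Set (Finset W))) (hd : n ≤ d) : VanishesAt F K d := by
  induction h with
  | empty => exact vanishesAt_empty d
  | @collapse K L Z hLZ hZ hL hmax _ ih =>
    have hK' : IsLowerSet (({s ∈ K | ¬ L ⊆ s} : Finset (Finset W)) : Set (Finset W)) := by
      intro s t hts hs
      rw [Finset.mem_coe, Finset.mem_filter] at hs ⊢
      exact ⟨hK hts hs.1, fun hLt => hs.2 (hLt.trans hts)⟩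
    rcases hLZ.eq_or_ssubset with rfl | hssub
    · exact (ih hK').of_collapse_facet (fun s hs hLs => (hmax s hs hLs).antisymm hLs)
        (hL.trans hd)
    · obtain ⟨e, heZ, heL⟩ := Finset.exists_of_ssubset hssub
      exact (ih hK').of_collapse_cone hK heL fun s hs hLs =>
        hK (Finset.insert_subset heZ (hmax s hs hLs)) hZ

/-- The fibres of `opt` are Boolean intervals, and one of maximal value can be collapsed first:
a member above its bottom has at least the same value, hence lies in the same fibre. -/
theorem isCollapsible_of_intervals {α Y β : Type*} [LinearOrder β] {n : ℕ}
    {K : Finset (Finset α)} {opt : Finset α → Y} {value : Y → β} {lo hi : Y → Finset α}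
    (hlo : ∀ s ∈ K, lo (opt s) ⊆ s) (hhi : ∀ s ∈ K, s ⊆ hi (opt s))
    (hcard : ∀ s ∈ K, (lo (opt s)).card ≤ n)
    (hint : ∀ s ∈ K, ∀ t, lo (opt s) ⊆ t → t ⊆ hi (opt s) → t ∈ K ∧ opt t = opt s)
    (hmono : ∀ s ∈ K, ∀ t ∈ K, t ⊆ s → value (opt t) ≤ value (opt s))
    (heq : ∀ s ∈ K, ∀ t ∈ K, t ⊆ s → value (opt t) = value (opt s) → opt t = opt s) :
    IsCollapsible n K := by
  induction K using Finset.strongInduction with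
  | H K ih =>
  rcases K.eq_empty_or_nonempty with rfl | hne
  · exact .empty
  obtain ⟨m, hm, hmax⟩ := Finset.exists_max_image K (fun s => value (opt s)) hne
  have hlohi : lo (opt m) ⊆ hi (opt m) := (hlo m hm).trans (hhi m hm)
  have hopt : ∀ s ∈ K, lo (opt m) ⊆ s → opt s = opt m := by
    intro s hs hms
    obtain ⟨hbot, hbot_opt⟩ := hint m hm _ subset_rfl hlohi
    have hle := hmono s hs _ hbot hms
    rw [← hbot_opt]
    refine (heq s hs _ hbot hms (hle.antisymm ?_)).symm
    rw [hbot_opt]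
    exact hmax s hs
  have hsub : ∀ s ∈ ({s ∈ K | ¬ lo (opt m) ⊆ s} : Finset _), s ∈ K :=
    fun s hs => (Finset.mem_filter.1 hs).1
  refine .collapse hlohi (hint m hm _ hlohi subset_rfl).1 (hcard m hm)
    (fun s hs hms => hopt s hs hms ▸ hhi s hs) ?_
  refine ih _ (Finset.filter_ssubset.2 ⟨m, hm, not_not.2 (hlo m hm)⟩)
    (fun s hs => hlo s (hsub s hs)) (fun s hs => hhi s (hsub s hs))
    (fun s hs => hcard s (hsub s hs)) (fun s hs t hst hts => ?_)
    (fun s hs t ht => hmono s (hsub s hs) t (hsub t ht))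
    (fun s hs t ht => heq s (hsub s hs) t (hsub t ht))
  obtain ⟨htK, ht⟩ := hint s (hsub s hs) t hst hts
  refine ⟨Finset.mem_filter.2 ⟨htK, fun hmt => (Finset.mem_filter.1 hs).2 ?_⟩, ht⟩
  rw [← hopt t htK hmt, ht]
  exact hlo s (hsub s hs)

end Collapse

section LinearProgramming

/-- The linear program of minimising `objective x` subject to `bound j ≤ constraint j x`, where
`j` ranges over a finite set that is allowed to vary. -/
structure LinearProgram (H ι : Type*) [AddCommGroup H] [Module ℝ H] where
  constraint : ι → Module.Dual ℝ H
  bound : ι → ℝ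
  objective : Module.Dual ℝ H

namespace LinearProgram

variable {H ι : Type*} [AddCommGroup H] [Module ℝ H] (P : LinearProgram H ι)

/-- The points satisfying the constraints in `A`. -/
def feasible (A : Finset ι) : Set H :=
  {x | ∀ j ∈ A, P.bound j ≤ P.constraint j x}

/-- Optimality of a point for the program whose constraints are those in `A`. -/
def IsOptimal (A : Finset ι) (x : H) : Prop :=
  x ∈ P.feasible A ∧ ∀ z ∈ P.feasible A, P.objective x ≤ P.objective z

/-- The constraints in `G` that hold with equality at `x`. -/
noncomputable def tight (G : Finset ι) (x : H) : Finset ι :=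
  {j ∈ G | P.constraint j x = P.bound j}

/-- Primal nondegeneracy: it bounds the number of constraints in `G` that are tight at a point. -/
def IsSimple (G : Finset ι) : Prop :=
  ∀ x, LinearIndepOn ℝ P.constraint (P.tight G x : Set ι)

/-- Dual nondegeneracy: the objective vanishes identically on no nonzero intersection of the
hyperplanes `constraint j = 0`. It makes optimal points unique. -/
def HasGenericObjective (G : Finset ι) : Prop :=
  ∀ T ⊆ G, (∀ d, (∀ j ∈ T, P.constraint j d = 0) → P.objective d = 0) →
    ∀ d, (∀ j ∈ T, P.constraint j d = 0) → d = 0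

variable {P} {A B G : Finset ι} {x z d : H}

lemma mem_tight {j : ι} : j ∈ P.tight G x ↔ j ∈ G ∧ P.constraint j x = P.bound j :=
  Finset.mem_filter

lemma feasible_anti (h : A ⊆ B) : P.feasible B ⊆ P.feasible A :=
  fun _ hx j hj => hx j (h hj)

lemma exists_pos_add_smul_mem_feasible (hx : x ∈ P.feasible A)
    (hd : ∀ j ∈ P.tight A x, 0 ≤ P.constraint j d) : ∃ t : ℝ, 0 < t ∧ x + t • d ∈ P.feasible A := by
  have hstep : ∀ j ∈ A, ∀ᶠ t in nhdsWithin (0 : ℝ) (Set.Ioi 0),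
      P.bound j ≤ P.constraint j x + t * P.constraint j d := by
    intro j hj
    rcases (hx j hj).eq_or_lt with heq | hlt
    · filter_upwards [self_mem_nhdsWithin] with t ht
      rw [heq]
      exact le_add_of_nonneg_right (mul_nonneg (le_of_lt ht) (hd j (mem_tight.2 ⟨hj, heq.symm⟩)))
    · have hcont : Continuous fun t : ℝ => P.constraint j x + t * P.constraint j d := by fun_prop
      refine nhdsWithin_le_nhds (hcont.continuousAt.eventually (lt_mem_nhds ?_) |>.mono
        fun t ht => le_of_lt ht)
      simpa only [zero_mul, add_zero] using hlt
  obtain ⟨t, hfeas, ht⟩ := (((Filter.eventually_all_finset A).2 hstep).and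
    self_mem_nhdsWithin).exists
  refine ⟨t, ht, fun j hj => ?_⟩
  rw [map_add, map_smul, smul_eq_mul]
  exact hfeas j hj

namespace IsOptimal

lemma objective_nonneg (hx : P.IsOptimal A x) (hd : ∀ j ∈ P.tight A x, 0 ≤ P.constraint j d) :
    0 ≤ P.objective d := by
  obtain ⟨t, ht, hfeas⟩ := exists_pos_add_smul_mem_feasible hx.1 hd
  have hle := hx.2 _ hfeas
  rw [map_add, map_smul, le_add_iff_nonneg_right] at hle
  exact nonneg_of_mul_nonneg_right hle ht

lemma objective_eq_zero (hx : P.IsOptimal A x) (hd : ∀ j ∈ P.tight A x, P.constraint j d = 0) :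
    P.objective d = 0 := by
  refine le_antisymm ?_ (hx.objective_nonneg fun j hj => (hd j hj).ge)
  rw [← neg_nonneg, ← map_neg]
  refine hx.objective_nonneg fun j hj => ?_
  rw [map_neg, hd j hj, neg_zero]

lemma of_tight_subset (hx : P.IsOptimal A x) (hxB : x ∈ P.feasible B) (h : P.tight A x ⊆ B) :
    P.IsOptimal B x := by
  refine ⟨hxB, fun z hz => ?_⟩
  rw [← sub_nonneg, ← map_sub]
  refine hx.objective_nonneg fun j hj => ?_
  rw [map_sub, (mem_tight.1 hj).2, sub_nonneg]
  exact hz j (h hj)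

lemma unique (hG : P.HasGenericObjective G) (hAG : A ⊆ G) (hx : P.IsOptimal A x)
    (hz : P.IsOptimal A z) : x = z := by
  have hxz : P.objective x = P.objective z := le_antisymm (hx.2 z hz.1) (hz.2 x hx.1)
  have hm : P.IsOptimal A ((1 / 2 : ℝ) • (x + z)) := by
    refine ⟨fun j hj => ?_, fun y hy => ?_⟩
    · rw [map_smul, map_add, smul_eq_mul]
      linarith [hx.1 j hj, hz.1 j hj]
    · rw [map_smul, map_add, smul_eq_mul]
      linarith [hx.2 y hy]
  refine sub_eq_zero.1 (hG (P.tight A ((1 / 2 : ℝ) • (x + z)))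
    ((Finset.filter_subset _ _).trans hAG) (fun d => hm.objective_eq_zero) _ fun j hj => ?_)
  obtain ⟨hjA, hj⟩ := mem_tight.1 hj
  rw [map_smul, map_add, smul_eq_mul] at hj
  rw [map_sub]
  linarith [hx.1 j hjA, hz.1 j hjA]

lemma objective_le (hx : P.IsOptimal A x) (hz : P.IsOptimal B z) (h : A ⊆ B) :
    P.objective x ≤ P.objective z :=
  hx.2 z (feasible_anti h hz.1)

lemma eq_of_objective_eq (hG : P.HasGenericObjective G) (hAG : A ⊆ G) (hx : P.IsOptimal A x)
    (hz : P.IsOptimal B z) (h : A ⊆ B) (hxz : P.objective x = P.objective z) : x = z :=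
  hx.unique hG hAG ⟨feasible_anti h hz.1, fun y hy => hxz ▸ hx.2 y hy⟩

/-- A constraint outside `A` that is tight at `x` would be a combination of the others: by
genericity these already cut out a point. -/
lemma tight_subset (hsimple : P.IsSimple G) (hG : P.HasGenericObjective G)
    (hAG : A ⊆ G) (hx : P.IsOptimal A x) : P.tight G x ⊆ A := by
  intro j hj
  by_contra hjA
  set T := (P.tight G x).erase j
  have hker : ∀ d, (∀ i ∈ T, P.constraint i d = 0) → d = 0 := by
    refine hG T ((Finset.erase_subset _ _).trans (Finset.filter_subset _ _)) fun d hd =>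
      hx.objective_eq_zero fun i hi => hd i (Finset.mem_erase.2 ⟨?_, ?_⟩)
    · rintro rfl
      exact hjA (mem_tight.1 hi).1
    · exact mem_tight.2 ⟨hAG (mem_tight.1 hi).1, (mem_tight.1 hi).2⟩
  have hspan : P.constraint j ∈ Submodule.span ℝ (P.constraint '' (T : Set ι)) := by
    rw [Set.image_eq_range]
    refine mem_span_of_iInf_ker_le_ker fun d hd => ?_
    rw [Submodule.mem_iInf] at hd
    rw [hker d fun i hi => hd ⟨i, hi⟩]
    exact Submodule.zero_mem _
  rw [Finset.coe_erase] at hspan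
  exact linearIndepOn_iff_notMem_span.1 (hsimple x) j hj hspan

end IsOptimal

lemma IsSimple.card_tight_le_finrank [FiniteDimensional ℝ H] (h : P.IsSimple G) (x : H) :
    (P.tight G x).card ≤ Module.finrank ℝ H := by
  rw [← Subspace.dual_finrank_eq, ← Fintype.card_coe]
  exact (h x).fintype_card_le_finrank

lemma exists_isOptimal {H : Type*} [NormedAddCommGroup H] [NormedSpace ℝ H]
    [FiniteDimensional ℝ H] {P : LinearProgram H ι} {z₀ : H} (hz₀ : z₀ ∈ P.feasible A)
    (hbdd : Bornology.IsBounded (P.feasible A ∩ {z | P.objective z ≤ P.objective z₀})) :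
    ∃ x, P.IsOptimal A x := by
  have hcont : ∀ φ : Module.Dual ℝ H, Continuous φ := LinearMap.continuous_of_finiteDimensional
  have hclosed : IsClosed (P.feasible A) := by
    simp only [feasible, Set.ofPred_forall]
    exact isClosed_biInter fun j _ => isClosed_le continuous_const (hcont _)
  have : ProperSpace H := FiniteDimensional.proper_real H
  have hcompact := Metric.isCompact_of_isClosed_isBounded
    (hclosed.inter (isClosed_le (hcont P.objective) continuous_const)) hbdd
  obtain ⟨x, hx, hmin⟩ :=
    hcompact.exists_isMinOn ⟨z₀, hz₀, le_refl (P.objective z₀)⟩ (hcont P.objective).continuousOn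
  refine ⟨x, hx.1, fun z hz => ?_⟩
  rcases le_total (P.objective z) (P.objective z₀) with hzz₀ | hzz₀
  · exact hmin ⟨hz, hzz₀⟩
  · exact le_trans hx.2 hzz₀

end LinearProgram

end LinearProgramming

section Genericity

/-- Finitely many hyperplanes have measure zero, so they do not cover a box. -/
lemma exists_forall_dotProduct_ne_zero {α κ : Type*} [Fintype α] [Finite κ] {d : κ → α → ℝ}
    (hd : ∀ k, d k ≠ 0) {r s : ℝ} (hrs : r < s) :
    ∃ x : α → ℝ, (∀ i, x i ∈ Set.Icc r s) ∧ ∀ k, d k ⬝ᵥ x ≠ 0 := by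
  by_contra! hcover
  have hsub : Set.Icc (fun _ : α => r) (fun _ => s) ⊆
      ⋃ k, (LinearMap.ker (dotProductEquiv ℝ α (d k)) : Set (α → ℝ)) := fun x hx => by
    obtain ⟨k, hk⟩ := hcover x fun i => ⟨hx.1 i, hx.2 i⟩
    exact Set.mem_iUnion.2 ⟨k, hk⟩
  have hnull : MeasureTheory.volume (Set.Icc (fun _ : α => r) fun _ => s) = 0 := by
    refine MeasureTheory.measure_mono_null hsub (MeasureTheory.measure_iUnion_null fun k =>
      MeasureTheory.Measure.addHaar_submodule _ _ fun htop => hd k ?_)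
    rwa [LinearMap.ker_eq_top, LinearEquiv.map_eq_zero_iff] at htop
  rw [Real.volume_Icc_pi, Finset.prod_const] at hnull
  exact pow_ne_zero _ (ENNReal.ofReal_pos.2 (sub_pos.2 hrs)).ne' hnull

lemma exists_forall_sum_mul_ne_zero {α κ : Type*} [Finite κ] (G : Finset α) {d : κ → α → ℝ}
    (hd : ∀ k, ∃ i ∈ G, d k i ≠ 0) {r s : ℝ} (hrs : r < s) :
    ∃ x : α → ℝ, (∀ i, x i ∈ Set.Icc r s) ∧ ∀ k, ∑ i ∈ G, d k i * x i ≠ 0 := by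
  have hd' : ∀ k, (fun i : G => d k i) ≠ 0 := fun k h => by
    obtain ⟨i, hi, hne⟩ := hd k
    exact hne (congrFun h ⟨i, hi⟩)
  obtain ⟨x, hx, hne⟩ := exists_forall_dotProduct_ne_zero hd' hrs
  refine ⟨fun i => if hi : i ∈ G then x ⟨i, hi⟩ else r, fun i => ?_, fun k hk => hne k ?_⟩
  · dsimp only
    split_ifs with hi
    · exact hx _
    · exact Set.left_mem_Icc.2 hrs.le
  · rw [← Finset.sum_coe_sort] at hk
    simpa only [dotProduct, Finset.coe_mem, dite_true] using hk

namespace LinearProgram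

lemma exists_hasGenericObjective {α ι : Type*} [Fintype α] (φ : ι → Module.Dual ℝ (α → ℝ))
    (G : Finset ι) {r s : ℝ} (hrs : r < s) :
    ∃ c : α → ℝ, (∀ i, c i ∈ Set.Icc r s) ∧
      ∀ b, (LinearProgram.mk φ b (dotProductEquiv ℝ α c)).HasGenericObjective G := by
  let I := {T : Finset ι // T ∈ G.powerset ∧ ∃ d, (∀ j ∈ T, φ j d = 0) ∧ d ≠ 0}
  have : Finite I := (G.powerset.finite_toSet.subset fun T hT => hT.1).to_subtype
  choose d hker hne using fun T : I => T.2.2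
  obtain ⟨c, hc, hdc⟩ := exists_forall_dotProduct_ne_zero hne hrs
  refine ⟨c, hc, fun b T hT hzero z hz => by_contra fun hz0 => ?_⟩
  let T' : I := ⟨T, Finset.mem_powerset.2 hT, z, hz, hz0⟩
  refine hdc T' ?_
  rw [dotProduct_comm]
  exact hzero _ (hker T')

lemma exists_relation_of_not_linearIndepOn {M ι κ : Type*} [AddCommGroup M] [Module ℝ M]
    [Fintype κ] {φ : ι ⊕ κ → M} (hφ : LinearIndependent ℝ (φ ∘ Sum.inr)) {E : Finset ι}
    {T : Finset (ι ⊕ κ)} (hTE : T ⊆ E.disjSum Finset.univ)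
    (hT : ¬ LinearIndepOn ℝ φ (T : Set (ι ⊕ κ))) :
    ∃ g : ι ⊕ κ → ℝ, (∀ j ∉ T, g j = 0) ∧ ∑ j ∈ E.disjSum Finset.univ, g j • φ j = 0 ∧
      ∃ e ∈ E, g (Sum.inl e) ≠ 0 := by
  obtain ⟨f, hf, i, hiT, hfi⟩ := not_linearIndepOn_finset_iff.1 hT
  have hsum : ∑ j ∈ E.disjSum Finset.univ, (if j ∈ T then f j else 0) • φ j = 0 := by
    rw [← hf, ← Finset.sum_subset hTE fun j _ hj => by rw [if_neg hj, zero_smul]]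
    exact Finset.sum_congr rfl fun j hj => by rw [if_pos hj]
  refine ⟨fun j => if j ∈ T then f j else 0, fun j hj => if_neg hj, hsum, ?_⟩
  by_contra! hzero
  rw [Finset.sum_disjSum, Finset.sum_eq_zero fun e he => by rw [hzero e he, zero_smul],
    zero_add] at hsum
  have hinr := Fintype.linearIndependent_iff.1 hφ _ hsum
  refine hfi ?_
  rw [← if_pos hiT (t := f i) (e := 0)]
  rcases i with e | k
  · exact hzero e (Finset.inl_mem_disjSum.1 (hTE hiT))
  · exact hinr k

/-- A linear relation among the constraints that are tight at a point gives the same relation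
among their bounds, and a generic choice of `w` violates each of the finitely many relations. -/
lemma exists_isSimple {H ι κ : Type*} [AddCommGroup H] [Module ℝ H] [Fintype κ]
    {φ : ι ⊕ κ → Module.Dual ℝ H} (hφ : LinearIndependent ℝ (φ ∘ Sum.inr)) (E : Finset ι)
    {r s : ℝ} (hrs : r < s) :
    ∃ w : ι → ℝ, (∀ e, w e ∈ Set.Icc r s) ∧
      ∀ c, (LinearProgram.mk φ (Sum.elim w 0) c).IsSimple (E.disjSum Finset.univ) := by
  let I := {T : Finset (ι ⊕ κ) // T ∈ (E.disjSum Finset.univ).powerset ∧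
    ¬ LinearIndepOn ℝ φ (T : Set (ι ⊕ κ))}
  have : Finite I := ((E.disjSum Finset.univ).powerset.finite_toSet.subset
    fun T hT => hT.1).to_subtype
  choose g hgT hgφ hgE using fun T : I =>
    exists_relation_of_not_linearIndepOn hφ (Finset.mem_powerset.1 T.2.1) T.2.2
  obtain ⟨w, hw, hgw⟩ := exists_forall_sum_mul_ne_zero E (d := fun T e => g T (Sum.inl e)) hgE hrs
  refine ⟨w, hw, fun c x => by_contra fun hdep => ?_⟩
  let T : I := ⟨_, Finset.mem_powerset.2 (Finset.filter_subset _ _), hdep⟩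
  have hbound : ∀ j, g T j * φ j x = g T j * Sum.elim w 0 j := fun j => by
    by_cases hj : j ∈ T.1
    · rw [(mem_tight.1 hj).2]
    · rw [hgT T j hj, zero_mul, zero_mul]
  refine hgw T ?_
  calc ∑ e ∈ E, g T (Sum.inl e) * w e
      = ∑ j ∈ E.disjSum Finset.univ, g T j * Sum.elim w 0 j := by
        simp only [Finset.sum_disjSum, Sum.elim_inl, Sum.elim_inr, Pi.zero_apply, mul_zero,
          Finset.sum_const_zero, add_zero]
    _ = ∑ j ∈ E.disjSum Finset.univ, (g T j • φ j) x :=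
        Finset.sum_congr rfl fun j _ => (hbound j).symm
    _ = 0 := by rw [← LinearMap.sum_apply, hgφ T, LinearMap.zero_apply]

end LinearProgram

end Genericity

section MatchingNumber

variable {V : Type}

lemma IsMatching.card_le_nu_s12 {τ M : Finset (Sym2 V)} (h : IsMatching M) (hM : M ⊆ τ) :
    M.card ≤ nu τ :=
  Finset.le_sup (f := Finset.card) (Finset.mem_filter.2 ⟨Finset.mem_powerset.2 hM, h⟩)

lemma exists_isMatching_card_eq_nu (τ : Finset (Sym2 V)) :
    ∃ M ⊆ τ, IsMatching M ∧ M.card = nu τ := by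
  have hne : (τ.powerset.filter fun M => IsMatching M).Nonempty :=
    ⟨∅, Finset.mem_filter.2 ⟨Finset.empty_mem_powerset τ, by simp [IsMatching]⟩⟩
  obtain ⟨M, hM, hcard⟩ := Finset.exists_mem_eq_sup _ hne Finset.card
  rw [Finset.mem_filter, Finset.mem_powerset] at hM
  exact ⟨M, hM.1, hM.2, hcard.symm⟩

lemma nu_mono_s12 {τ ρ : Finset (Sym2 V)} (h : ρ ⊆ τ) : nu ρ ≤ nu τ := by
  obtain ⟨M, hMρ, hM, hcard⟩ := exists_isMatching_card_eq_nu ρ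
  exact hcard ▸ hM.card_le_nu_s12 (hMρ.trans h)

lemma nu_le_card_of_cover {ρ : Finset (Sym2 V)} {C : Finset V} (hC : ∀ e ∈ ρ, ∃ v ∈ C, v ∈ e) :
    nu ρ ≤ C.card := by
  obtain ⟨M, hMρ, hM, hcard⟩ := exists_isMatching_card_eq_nu ρ
  rw [← hcard]
  refine Finset.card_le_card_of_forall_subsingleton (fun e v => v ∈ e)
    (fun e he => hC e (hMρ he)) fun v _ e he f hf => by_contra fun hef => ?_
  exact hM.2 e he.1 f hf.1 hef v he.2 hf.2

lemma card_le_nu_of_injective {ι : Type*} [Fintype ι] {τ : Finset (Sym2 V)} {f g : ι → V}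
    (hf : Function.Injective f) (hg : Function.Injective g) (hfg : ∀ i j, f i ≠ g j)
    (hτ : ∀ i, s(f i, g i) ∈ τ) : Fintype.card ι ≤ nu τ := by
  have hinj : Function.Injective fun i => s(f i, g i) := fun i j hij => by
    rcases Sym2.eq_iff.1 hij with h | h
    · exact hf h.1
    · exact absurd h.1 (hfg i j)
  rw [← Finset.card_univ, ← Finset.card_image_of_injective _ hinj]
  refine IsMatching.card_le_nu_s12 ⟨?_, ?_⟩ (Finset.image_subset_iff.2 fun i _ => hτ i)
  · intro e he
    obtain ⟨i, -, rfl⟩ := Finset.mem_image.1 he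
    exact hfg i i
  · intro e he e' he' hne v hv hv'
    obtain ⟨i, -, rfl⟩ := Finset.mem_image.1 he
    obtain ⟨j, -, rfl⟩ := Finset.mem_image.1 he'
    have hij : i ≠ j := fun h => hne (h ▸ rfl)
    rcases Sym2.mem_iff.1 hv with rfl | rfl <;> rcases Sym2.mem_iff.1 hv' with h | h
    · exact hij (hf h)
    · exact hfg i j h
    · exact hfg j i h.symm
    · exact hij (hg h)

lemma isLowerSet_NM (k : ℕ) (E : Finset (Sym2 V)) :
    IsLowerSet (NM k E : Set (Finset (Sym2 V))) := by
  intro τ ρ hρτ hτ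
  rw [Finset.mem_coe, NM, Finset.mem_filter, Finset.mem_powerset] at hτ ⊢
  exact ⟨hρτ.trans hτ.1, (nu_mono_s12 hρτ).trans_lt hτ.2⟩

end MatchingNumber

section CoverProgram

variable {V : Type} {S : Finset V} {c x : S → ℝ} {w : Sym2 V → ℝ} {E τ ρ : Finset (Sym2 V)}

/-- The sum of a vertex weighting over the endpoints of `e`. -/
noncomputable def edgeSum (S : Finset V) (e : Sym2 V) : Module.Dual ℝ (S → ℝ) :=
  ∑ v : S with ↑v ∈ e, LinearMap.proj v

/-- The fractional vertex cover program on the vertex set `S` with vertex costs `c` and edge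
demands `w`. The constraints indexed by `S` are `0 ≤ x v`; those of an edge set `τ` thus form
`τ.disjSum univ`. -/
noncomputable def coverProgram (S : Finset V) (c : S → ℝ) (w : Sym2 V → ℝ) :
    LinearProgram (S → ℝ) (Sym2 V ⊕ S) where
  constraint := Sum.elim (edgeSum S) LinearMap.proj
  bound := Sum.elim w 0
  objective := dotProductEquiv ℝ S c

lemma edgeSum_apply (e : Sym2 V) (x : S → ℝ) : edgeSum S e x = ∑ v : S with ↑v ∈ e, x v := by
  rw [edgeSum, LinearMap.sum_apply]
  rfl

lemma edgeSum_mk {a b : S} (hab : a ≠ b) (x : S → ℝ) :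
    edgeSum S s(↑a, ↑b) x = x a + x b := by
  have hends : ({v : S | ↑v ∈ s((a : V), ↑b)} : Finset S) = {a, b} := by
    ext v
    simp only [Finset.mem_filter, Finset.mem_univ, true_and, Sym2.mem_iff, Subtype.coe_inj,
      Finset.mem_insert, Finset.mem_singleton]
  rw [edgeSum_apply, hends, Finset.sum_pair hab]

lemma mem_feasible_coverProgram :
    x ∈ (coverProgram S c w).feasible (τ.disjSum Finset.univ) ↔
      (∀ e ∈ τ, w e ≤ edgeSum S e x) ∧ ∀ v, 0 ≤ x v := by
  refine ⟨fun h => ⟨fun e he => h _ (Finset.inl_mem_disjSum.2 he),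
    fun v => h _ (Finset.inr_mem_disjSum.2 (Finset.mem_univ v))⟩, fun h j hj => ?_⟩
  rcases j with e | v
  · exact h.1 e (Finset.inl_mem_disjSum.1 hj)
  · exact h.2 v

lemma inl_mem_tight_coverProgram {e : Sym2 V} :
    Sum.inl e ∈ (coverProgram S c w).tight (τ.disjSum Finset.univ) x ↔
      e ∈ τ ∧ edgeSum S e x = w e :=
  LinearProgram.mem_tight.trans (and_congr_left fun _ => Finset.inl_mem_disjSum)

lemma inr_mem_tight_coverProgram {v : S} :
    Sum.inr v ∈ (coverProgram S c w).tight (τ.disjSum Finset.univ) x ↔ x v = 0 :=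
  LinearProgram.mem_tight.trans
    (and_iff_right (Finset.inr_mem_disjSum.2 (Finset.mem_univ v)))

lemma exists_mem_feasible_coverProgram (hτ : ∀ e ∈ τ, ∃ v : S, ↑v ∈ e) :
    ∃ x, x ∈ (coverProgram S c w).feasible (τ.disjSum Finset.univ) := by
  have hr : 0 ≤ ∑ e ∈ τ, |w e| := Finset.sum_nonneg fun e _ => abs_nonneg (w e)
  refine ⟨fun _ => ∑ e ∈ τ, |w e|, mem_feasible_coverProgram.2 ⟨fun e he => ?_, fun _ => hr⟩⟩
  obtain ⟨v, hv⟩ := hτ e he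
  rw [edgeSum_apply]
  calc w e ≤ |w e| := le_abs_self _
    _ ≤ ∑ e ∈ τ, |w e| := Finset.single_le_sum (fun e _ => abs_nonneg (w e)) he
    _ ≤ ∑ v : S with ↑v ∈ e, ∑ e ∈ τ, |w e| := Finset.single_le_sum
        (f := fun _ => ∑ e ∈ τ, |w e|) (fun _ _ => hr)
        (Finset.mem_filter.2 ⟨Finset.mem_univ v, hv⟩)

lemma exists_isOptimal_coverProgram (hc : ∀ v, 1 ≤ c v) (hτ : ∀ e ∈ τ, ∃ v : S, ↑v ∈ e) :
    ∃ x, (coverProgram S c w).IsOptimal (τ.disjSum Finset.univ) x := by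
  obtain ⟨z₀, hz₀⟩ := exists_mem_feasible_coverProgram (c := c) (w := w) hτ
  refine LinearProgram.exists_isOptimal hz₀ ((Metric.isBounded_Icc (0 : S → ℝ)
    (fun _ => c ⬝ᵥ z₀)).subset fun z ⟨hz, hzz₀⟩ => ?_)
  have hz0 := (mem_feasible_coverProgram.1 hz).2
  refine ⟨hz0, fun v => le_trans ?_ hzz₀⟩
  calc z v ≤ c v * z v := le_mul_of_one_le_left (hz0 v) (hc v)
    _ ≤ c ⬝ᵥ z := Finset.single_le_sum (f := fun v => c v * z v)
        (fun u _ => mul_nonneg (zero_le_one.trans (hc u)) (hz0 u)) (Finset.mem_univ v)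

/-- The neighbours of `v` along the edges of `τ` whose demand is met with equality at `x`. -/
noncomputable def tightNeighbors (w : Sym2 V → ℝ) (τ : Finset (Sym2 V)) (x : S → ℝ) (v : S) :
    Finset S :=
  {u | s(↑v, ↑u) ∈ τ ∧ edgeSum S s(↑v, ↑u) x = w s(↑v, ↑u)}

lemma mem_tightNeighbors {u v : S} : u ∈ tightNeighbors w τ x v ↔
    s(↑v, ↑u) ∈ τ ∧ edgeSum S s(↑v, ↑u) x = w s(↑v, ↑u) := by
  simp only [tightNeighbors, Finset.mem_filter, Finset.mem_univ, true_and]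

/-- Otherwise lowering `x` on `X` and raising it on the tight neighbours of `X` would pay off. -/
lemma sum_le_sum_tightNeighbors
    (hτ : ∀ e ∈ τ, ∃ a b : S, a ≠ b ∧ e = s(↑a, ↑b))
    (hx : (coverProgram S c w).IsOptimal (τ.disjSum Finset.univ) x)
    {X : Finset S} (hX : ∀ v ∈ X, x v ≠ 0) :
    ∑ v ∈ X, c v ≤ ∑ v ∈ X.biUnion (tightNeighbors w τ x), c v := by
  set Y := X.biUnion (tightNeighbors w τ x)
  have hobj : (coverProgram S c w).objective
      (fun v => (if v ∈ Y then 1 else 0) - if v ∈ X then 1 else 0) =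
        ∑ v ∈ Y, c v - ∑ v ∈ X, c v := by
    simp only [coverProgram, dotProductEquiv_apply_apply, dotProduct, mul_sub, mul_ite, mul_one,
      mul_zero, Finset.sum_sub_distrib, Finset.sum_ite_mem, Finset.univ_inter]
  rw [← sub_nonneg, ← hobj]
  refine hx.objective_nonneg fun j hj => ?_
  rcases j with e | v
  · obtain ⟨he, htight⟩ := inl_mem_tight_coverProgram.1 hj
    obtain ⟨a, b, hab, rfl⟩ := hτ e he
    have hb : a ∈ X → b ∈ Y := fun ha =>
      Finset.mem_biUnion.2 ⟨a, ha, mem_tightNeighbors.2 ⟨he, htight⟩⟩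
    have ha : b ∈ X → a ∈ Y := fun hb =>
      Finset.mem_biUnion.2 ⟨b, hb, mem_tightNeighbors.2 (by rw [Sym2.eq_swap]; exact ⟨he, htight⟩)⟩
    change 0 ≤ edgeSum S s(↑a, ↑b) _
    rw [edgeSum_mk hab]
    split_ifs <;> first | (exfalso; tauto) | norm_num
  · have hv : v ∉ X := fun hv => hX v hv (inr_mem_tight_coverProgram.1 hj)
    change (0 : ℝ) ≤ (if v ∈ Y then 1 else 0) - if v ∈ X then 1 else 0
    rw [if_neg hv]
    split_ifs <;> norm_num

lemma card_le_card_tightNeighbors {δ : ℝ} (hδ : S.card * δ < 1)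
    (hτ : ∀ e ∈ τ, ∃ a b : S, a ≠ b ∧ e = s(↑a, ↑b)) (hc : ∀ v, c v ∈ Set.Icc 1 (1 + δ))
    (hx : (coverProgram S c w).IsOptimal (τ.disjSum Finset.univ) x)
    {X : Finset S} (hX : ∀ v ∈ X, x v ≠ 0) :
    X.card ≤ (X.biUnion (tightNeighbors w τ x)).card := by
  set Y := X.biUnion (tightNeighbors w τ x)
  have hYδ : Y.card * δ < 1 := by
    rcases le_total δ 0 with h | h
    · exact (mul_nonpos_of_nonneg_of_nonpos Y.card.cast_nonneg h).trans_lt one_pos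
    · refine (mul_le_mul_of_nonneg_right (Nat.cast_le.2 ?_) h).trans_lt hδ
      exact (Finset.card_le_univ Y).trans_eq (Fintype.card_coe S)
  have hlt : (X.card : ℝ) < Y.card + 1 := calc
    (X.card : ℝ) = ∑ v ∈ X, 1 := by rw [Finset.sum_const, nsmul_eq_mul, mul_one]
    _ ≤ ∑ v ∈ X, c v := Finset.sum_le_sum fun v _ => (hc v).1
    _ ≤ ∑ v ∈ Y, c v := sum_le_sum_tightNeighbors hτ hx hX
    _ ≤ ∑ v ∈ Y, (1 + δ) := Finset.sum_le_sum fun v _ => (hc v).2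
    _ = Y.card + Y.card * δ := by rw [Finset.sum_const, nsmul_eq_mul, mul_add, mul_one]
    _ < Y.card + 1 := (add_lt_add_iff_left _).2 hYδ
  exact Nat.lt_succ_iff.1 (by exact_mod_cast hlt)

/-- By Hall's theorem `P` can be matched along tight edges. -/
lemma card_le_nu_of_isOptimal {δ : ℝ} (hδ : S.card * δ < 1)
    (hτ : ∀ e ∈ τ, ∃ a b : S, a ≠ b ∧ e = s(↑a, ↑b)) (hc : ∀ v, c v ∈ Set.Icc 1 (1 + δ))
    (hx : (coverProgram S c w).IsOptimal (τ.disjSum Finset.univ) x)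
    {P : Finset S} (hP : ∀ v ∈ P, x v ≠ 0) (hPP : ∀ v ∈ P, Disjoint (tightNeighbors w τ x v) P) :
    P.card ≤ nu τ := by
  have hhall : ∀ X : Finset P,
      X.card ≤ (X.biUnion fun v => tightNeighbors w τ x v).card := fun X => by
    have hX : ∀ v ∈ X.image Subtype.val, x v ≠ 0 :=
      Finset.forall_mem_image.2 fun v _ => hP v v.2
    have hcard := card_le_card_tightNeighbors hδ hτ hc hx hX
    rwa [Finset.card_image_of_injective _ Subtype.val_injective, Finset.image_biUnion] at hcard
  obtain ⟨f, hf, hfN⟩ := (Finset.all_card_le_biUnion_card_iff_exists_injective _).1 hhall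
  rw [← Fintype.card_coe]
  refine card_le_nu_of_injective (f := fun v : P => ((v : S) : V)) (g := fun v => (f v : V))
    (Subtype.val_injective.comp Subtype.val_injective) (Subtype.val_injective.comp hf)
    (fun u v huv => ?_) fun v => (mem_tightNeighbors.1 (hfN v)).1
  refine Finset.disjoint_left.1 (hPP v v.2) (hfN v) ?_
  rw [← Subtype.val_injective huv]
  exact u.2

/-- Of the `n + 1` disjoint intervals `(iδ, (i + 1)δ]` in `[0, 1]`, one misses all `n` values. -/
lemma exists_forall_notMem_Ioc {ι : Type*} [Fintype ι] (y : ι → ℝ) {δ : ℝ} (hδ : 0 < δ)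
    (hcard : (Fintype.card ι + 1) * δ ≤ 1) :
    ∃ θ, 0 ≤ θ ∧ θ + δ ≤ 1 ∧ ∀ i, y i ∉ Set.Ioc θ (θ + δ) := by
  by_contra! hall
  have hhit : ∀ m : Fin (Fintype.card ι + 1), ∃ i, y i ∈ Set.Ioc (m * δ) (m * δ + δ) := fun m => by
    refine hall (m * δ) (by positivity) (le_trans ?_ hcard)
    rw [← add_one_mul]
    have hm : (m : ℝ) + 1 ≤ Fintype.card ι + 1 := by exact_mod_cast m.2
    exact mul_le_mul_of_nonneg_right hm hδ.le
  choose f hf using hhit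
  obtain ⟨m, n, hmn, hfmn⟩ := Fintype.exists_ne_map_eq_of_card_lt f (by simp)
  wlog hlt : m < n generalizing m n
  · exact this n m hmn.symm hfmn.symm (lt_of_le_of_ne (not_lt.1 hlt) hmn.symm)
  have hle : (m : ℝ) + 1 ≤ n := by exact_mod_cast hlt
  have h := mul_le_mul_of_nonneg_right hle hδ.le
  linarith [(hf m).2, (hfmn ▸ hf n).1]

/-- The edges of `E` join vertices of `S` on different sides. -/
def IsBipartiteOn (side : V → Bool) (S : Finset V) (E : Finset (Sym2 V)) : Prop :=
  ∀ e ∈ E, ∃ a b : S, e = s(↑a, ↑b) ∧ side a = true ∧ side b = false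

variable {side : V → Bool}

lemma IsBipartiteOn.mono (hE : IsBipartiteOn side S E) (h : τ ⊆ E) : IsBipartiteOn side S τ :=
  fun e he => hE e (h he)

lemma ne_of_side {a b : S} (ha : side a = true) (hb : side b = false) : a ≠ b := by
  rintro rfl
  exact absurd (ha.symm.trans hb) Bool.true_eq_false_eq_False

lemma IsBipartiteOn.exists_ne (hE : IsBipartiteOn side S E) :
    ∀ e ∈ E, ∃ a b : S, a ≠ b ∧ e = s(↑a, ↑b) := fun e he => by
  obtain ⟨a, b, rfl, ha, hb⟩ := hE e he
  exact ⟨a, b, ne_of_side ha hb, rfl⟩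

lemma IsBipartiteOn.disjoint_tightNeighbors (hτ : IsBipartiteOn side S τ) {P : Finset S}
    (hP : ∀ a ∈ P, ∀ b ∈ P, side a = true → side b = false → x a + x b ≠ w s(↑a, ↑b)) :
    ∀ v ∈ P, Disjoint (tightNeighbors w τ x v) P := by
  refine fun v hv => Finset.disjoint_left.2 fun u huv hu => ?_
  obtain ⟨hmem, htight⟩ := mem_tightNeighbors.1 huv
  obtain ⟨a, b, hab, ha, hb⟩ := hτ _ hmem
  rw [hab, edgeSum_mk (ne_of_side ha hb)] at htight
  rcases Sym2.eq_iff.1 hab with ⟨hva, hub⟩ | ⟨hvb, hua⟩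
  · rw [Subtype.val_injective hva] at hv
    rw [Subtype.val_injective hub] at hu
    exact hP a hv b hu ha hb htight
  · rw [Subtype.val_injective hvb] at hv
    rw [Subtype.val_injective hua] at hu
    exact hP a hu b hv ha hb htight

/-- Rounding `x` at a threshold `θ` that no value of `x` slightly exceeds gives an integral cover
of `ρ` containing no tight edge of `τ`. -/
lemma nu_le_nu_of_isOptimal {δ : ℝ} (hδ : 0 < δ) (hSδ : (S.card + 1) * δ ≤ 1)
    (hτ : IsBipartiteOn side S τ) (hρ : IsBipartiteOn side S ρ)
    (hc : ∀ v, c v ∈ Set.Icc 1 (1 + δ)) (hw : ∀ e, w e ∈ Set.Icc 1 (1 + δ))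
    (hx : (coverProgram S c w).IsOptimal (τ.disjSum Finset.univ) x)
    (hρx : ∀ e ∈ ρ, w e ≤ edgeSum S e x) : nu ρ ≤ nu τ := by
  obtain ⟨θ, hθ, hθδ, hgap⟩ := exists_forall_notMem_Ioc x hδ (by rwa [Fintype.card_coe])
  set C : Finset S := {v | if side v then θ < x v else 1 - θ ≤ x v}
  have hCtrue : ∀ {a : S}, side a = true → (a ∈ C ↔ θ < x a) := fun ha => by
    simp only [C, Finset.mem_filter, Finset.mem_univ, true_and, ha, if_true]
  have hCfalse : ∀ {b : S}, side b = false → (b ∈ C ↔ 1 - θ ≤ x b) := fun hb => by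
    simp only [C, Finset.mem_filter, Finset.mem_univ, true_and, hb, Bool.false_eq_true, if_false]
  have hpos : ∀ v ∈ C, x v ≠ 0 := fun v hv => by
    rcases hside : side v
    · linarith [(hCfalse hside).1 hv]
    · linarith [(hCtrue hside).1 hv]
  have hcover : ∀ e ∈ ρ, ∃ v ∈ C.map (.subtype (· ∈ S)), v ∈ e := fun e he => by
    obtain ⟨a, b, rfl, ha, hb⟩ := hρ e he
    have hle := (hw _).1.trans (hρx _ he)
    rw [edgeSum_mk (ne_of_side ha hb)] at hle
    by_cases haC : a ∈ C
    · exact ⟨a, Finset.mem_map_of_mem _ haC, Sym2.mem_mk_left _ _⟩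
    · rw [hCtrue ha, not_lt] at haC
      exact ⟨b, Finset.mem_map_of_mem _ ((hCfalse hb).2 (by linarith)), Sym2.mem_mk_right _ _⟩
  have hloose : ∀ a ∈ C, ∀ b ∈ C, side a = true → side b = false →
      x a + x b ≠ w s(↑a, ↑b) := fun a haC b hbC ha hb htight => by
    rw [hCtrue ha] at haC
    rw [hCfalse hb] at hbC
    exact hgap a ⟨haC, by linarith [(hw s(↑a, ↑b)).2]⟩
  calc nu ρ ≤ (C.map (.subtype (· ∈ S))).card := nu_le_card_of_cover hcover
    _ = C.card := Finset.card_map _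
    _ ≤ nu τ := card_le_nu_of_isOptimal (by linarith) hτ.exists_ne hc hx hpos
        (hτ.disjoint_tightNeighbors hloose)

lemma card_ne_zero_le_two_mul_nu {δ : ℝ} (hSδ : S.card * δ < 1)
    (hτ : IsBipartiteOn side S τ) (hc : ∀ v, c v ∈ Set.Icc 1 (1 + δ))
    (hx : (coverProgram S c w).IsOptimal (τ.disjSum Finset.univ) x) :
    ({v : S | x v ≠ 0} : Finset S).card ≤ 2 * nu τ := by
  have hside : ∀ P ⊆ ({v : S | x v ≠ 0} : Finset S),
      (∀ a ∈ P, ∀ b ∈ P, side a = side b) → P.card ≤ nu τ := fun P hPx hP => by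
    refine card_le_nu_of_isOptimal hSδ hτ.exists_ne hc hx
      (fun v hv => (Finset.mem_filter.1 (hPx hv)).2)
      (hτ.disjoint_tightNeighbors fun a ha b hb hsa hsb => ?_)
    exact absurd (hsa.symm.trans ((hP a ha b hb).trans hsb)) Bool.true_eq_false_eq_False
  rw [← Finset.card_filter_add_card_filter_not (fun v : S => side v = true), two_mul]
  refine add_le_add (hside _ (Finset.filter_subset _ _) fun a ha b hb => ?_)
    (hside _ (Finset.filter_subset _ _) fun a ha b hb => ?_)
  · exact (Finset.mem_filter.1 ha).2.trans (Finset.mem_filter.1 hb).2.symm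
  · exact (Bool.eq_false_of_not_eq_true (Finset.mem_filter.1 ha).2).trans
      (Bool.eq_false_of_not_eq_true (Finset.mem_filter.1 hb).2).symm

lemma card_tight_edges_le (hsimple : (coverProgram S c w).IsSimple (E.disjSum Finset.univ))
    (x : S → ℝ) : ({e ∈ E | edgeSum S e x = w e} : Finset (Sym2 V)).card ≤
      ({v : S | x v ≠ 0} : Finset S).card := by
  have htight : (coverProgram S c w).tight (E.disjSum Finset.univ) x =
      ({e ∈ E | edgeSum S e x = w e} : Finset (Sym2 V)).disjSum {v : S | x v = 0} := by
    ext (e | v)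
    · rw [inl_mem_tight_coverProgram, Finset.inl_mem_disjSum, Finset.mem_filter]
    · rw [inr_mem_tight_coverProgram, Finset.inr_mem_disjSum, Finset.mem_filter,
        and_iff_right (Finset.mem_univ v)]
  have hle := hsimple.card_tight_le_finrank x
  have hsplit := Finset.card_filter_add_card_filter_not (s := Finset.univ) fun v : S => x v = 0
  rw [htight, Finset.card_disjSum, Module.finrank_fintype_fun_eq_card, ← Finset.card_univ,
    ← hsplit, add_comm] at hle
  exact Nat.le_of_add_le_add_left hle

lemma isOptimal_coverProgram_of_mem_interval (hτE : τ ⊆ E)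
    (hx : (coverProgram S c w).IsOptimal (τ.disjSum Finset.univ) x)
    (hlo : {e ∈ E | edgeSum S e x = w e} ⊆ ρ) (hhi : ∀ e ∈ ρ, w e ≤ edgeSum S e x) :
    (coverProgram S c w).IsOptimal (ρ.disjSum Finset.univ) x := by
  refine hx.of_tight_subset
    (mem_feasible_coverProgram.2 ⟨hhi, (mem_feasible_coverProgram.1 hx.1).2⟩) fun j hj => ?_
  rcases j with e | v
  · obtain ⟨heτ, he⟩ := inl_mem_tight_coverProgram.1 hj
    exact Finset.inl_mem_disjSum.2 (hlo (Finset.mem_filter.2 ⟨hτE heτ, he⟩))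
  · exact Finset.inr_mem_disjSum.2 (Finset.mem_univ v)

lemma exists_generic_coverProgram (S : Finset V) (E : Finset (Sym2 V)) {δ : ℝ} (hδ : 0 < δ) :
    ∃ (c : S → ℝ) (w : Sym2 V → ℝ),
      (∀ v, c v ∈ Set.Icc 1 (1 + δ)) ∧ (∀ e, w e ∈ Set.Icc 1 (1 + δ)) ∧
      (coverProgram S c w).IsSimple (E.disjSum Finset.univ) ∧
      (coverProgram S c w).HasGenericObjective (E.disjSum Finset.univ) := by
  have hδ1 : 1 < 1 + δ := lt_add_of_pos_right 1 hδ
  have hindep : LinearIndependent ℝ (LinearMap.proj : S → Module.Dual ℝ (S → ℝ)) := by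
    refine Fintype.linearIndependent_iff.2 fun g hg v => ?_
    have hgv := LinearMap.congr_fun hg (Pi.single v 1)
    simpa only [LinearMap.sum_apply, LinearMap.smul_apply, LinearMap.proj_apply, smul_eq_mul,
      Pi.single_apply, mul_ite, mul_one, mul_zero, Finset.sum_ite_eq', Finset.mem_univ, if_true,
      LinearMap.zero_apply] using hgv
  obtain ⟨c, hc, hgen⟩ := LinearProgram.exists_hasGenericObjective
    (Sum.elim (edgeSum S) LinearMap.proj) (E.disjSum Finset.univ) hδ1
  obtain ⟨w, hw, hsimple⟩ := LinearProgram.exists_isSimple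
    (φ := Sum.elim (edgeSum S) LinearMap.proj) hindep E hδ1
  exact ⟨c, w, hc, hw, hsimple _, hgen _⟩

lemma mem_NM {k : ℕ} : τ ∈ NM k E ↔ τ ⊆ E ∧ nu τ < k := by
  rw [NM, Finset.mem_filter, Finset.mem_powerset]

lemma isCollapsible_NM_of_generic {δ : ℝ} (hδ : 0 < δ) (hSδ : (S.card + 1) * δ ≤ 1)
    (hE : IsBipartiteOn side S E) (hc : ∀ v, c v ∈ Set.Icc 1 (1 + δ))
    (hw : ∀ e, w e ∈ Set.Icc 1 (1 + δ))
    (hsimple : (coverProgram S c w).IsSimple (E.disjSum Finset.univ))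
    (hgen : (coverProgram S c w).HasGenericObjective (E.disjSum Finset.univ)) (k : ℕ) :
    IsCollapsible (2 * k - 2) (NM k E) := by
  have hexists : ∀ τ ⊆ E, ∃ x, (coverProgram S c w).IsOptimal (τ.disjSum Finset.univ) x :=
    fun τ hτE => exists_isOptimal_coverProgram (fun v => (hc v).1) fun e he =>
      let ⟨a, b, hab, _⟩ := hE e (hτE he); ⟨a, hab ▸ Sym2.mem_mk_left _ _⟩
  choose! opt hopt using hexists
  have hsub : ∀ {τ ρ : Finset (Sym2 V)}, τ ⊆ ρ →
      (τ.disjSum Finset.univ : Finset (Sym2 V ⊕ S)) ⊆ ρ.disjSum Finset.univ :=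
    fun h => Finset.disjSum_mono h subset_rfl
  refine isCollapsible_of_intervals (opt := opt) (value := (coverProgram S c w).objective)
    (lo := fun x => {e ∈ E | edgeSum S e x = w e}) (hi := fun x => {e ∈ E | w e ≤ edgeSum S e x})
    (fun τ hτ e he => ?_) (fun τ hτ e he => ?_) (fun τ hτ => ?_) (fun τ hτ ρ hlo hhi => ?_)
    (fun τ hτ ρ _ hρτ => ?_) (fun τ hτ ρ _ hρτ hval => ?_)
  all_goals obtain ⟨hτE, hτk⟩ := mem_NM.1 hτ
  all_goals have hx := hopt τ hτE
  · exact Finset.inl_mem_disjSum.1 (hx.tight_subset hsimple hgen (hsub hτE)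
      (inl_mem_tight_coverProgram.2 (Finset.mem_filter.1 he)))
  · exact Finset.mem_filter.2 ⟨hτE he, (mem_feasible_coverProgram.1 hx.1).1 e he⟩
  · have hle := (card_tight_edges_le hsimple (opt τ)).trans
      (card_ne_zero_le_two_mul_nu (by linarith) (hE.mono hτE) hc hx)
    omega
  · have hρE : ρ ⊆ E := hhi.trans (Finset.filter_subset _ _)
    have hρx : ∀ e ∈ ρ, w e ≤ edgeSum S e (opt τ) := fun e he => (Finset.mem_filter.1 (hhi he)).2
    have hnu := nu_le_nu_of_isOptimal hδ hSδ (hE.mono hτE) (hE.mono hρE) hc hw hx hρx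
    exact ⟨mem_NM.2 ⟨hρE, hnu.trans_lt hτk⟩, (hopt ρ hρE).unique hgen (hsub hρE)
      (isOptimal_coverProgram_of_mem_interval hτE hx hlo hρx)⟩
  · exact (hopt ρ (hρτ.trans hτE)).objective_le hx (hsub hρτ)
  · exact (hopt ρ (hρτ.trans hτE)).eq_of_objective_eq hgen (hsub (hρτ.trans hτE)) hx (hsub hρτ)
      hval

theorem isCollapsible_NM (hE : IsBipartiteOn side S E) (k : ℕ) :
    IsCollapsible (2 * k - 2) (NM k E) := by
  have hS : (0 : ℝ) < S.card + 1 := by positivity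
  obtain ⟨c, w, hc, hw, hsimple, hgen⟩ := exists_generic_coverProgram S E (inv_pos.2 hS)
  exact isCollapsible_NM_of_generic (inv_pos.2 hS) (mul_inv_cancel₀ hS.ne').le hE hc hw hsimple
    hgen k

lemma exists_isBipartiteOn (hE : ∀ e ∈ E, ∃ a b, e = s(a, b) ∧ side a ≠ side b) :
    ∃ S, IsBipartiteOn side S E := by
  refine ⟨E.biUnion Sym2.toFinset, fun e he => ?_⟩
  obtain ⟨a, b, rfl, hab⟩ := hE e he
  have ha : a ∈ E.biUnion Sym2.toFinset :=
    Finset.mem_biUnion.2 ⟨_, he, Sym2.mem_toFinset.2 (Sym2.mem_mk_left a b)⟩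
  have hb : b ∈ E.biUnion Sym2.toFinset :=
    Finset.mem_biUnion.2 ⟨_, he, Sym2.mem_toFinset.2 (Sym2.mem_mk_right a b)⟩
  cases hside : side a
  · rw [hside, ne_comm, Bool.ne_false_iff] at hab
    exact ⟨⟨b, hb⟩, ⟨a, ha⟩, Sym2.eq_swap, hab, hside⟩
  · rw [hside, ne_comm, ne_eq, Bool.not_eq_true] at hab
    exact ⟨⟨a, ha⟩, ⟨b, hb⟩, rfl, hside, hab⟩

end CoverProgram

/-- For `k ≥ 2` and any finite bipartite graph with edge set `E`, the non-matching complex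
`NM_k(E)` has vanishing reduced homology (over any field) in all dimensions `d ≥ 2k - 2`. -/
theorem NM_vanishing_bipartite {V : Type} [LinearOrder (Sym2 V)] (F : Type) [Field F]
    (k : ℕ) (hk : 2 ≤ k) (side : V → Bool) (E : Finset (Sym2 V))
    (hbip : ∀ e ∈ E, ∃ x y, e = s(x, y) ∧ side x ≠ side y) :
    ∀ d, 2 * k - 2 ≤ d → VanishesAt F (NM k E) d := by
  intro d hd
  obtain ⟨S, hS⟩ := exists_isBipartiteOn hbip
  exact (isCollapsible_NM hS k).vanishesAt F (isLowerSet_NM k E) hd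
end
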